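/- arXiv:1402.6769 — 10 statements merged into one kernel-verified Lean document; each statement's English description precedes it below -/
import Mathlib

section
/- Let Y be a nonnegative random variable with finite nonzero mean μ = E[Y], and suppose there exists a random variable Y^s defined on the same probability space having the Y-size bias distribution and satisfying |Y^s − Y| ≤ c almost surely for some constant c > 0. Then for all t > 0, P(Y − μ ≤ −t) ≤ exp(−t²/(2cμ)). -/
open MeasureTheory

/-- `Ys` has the `Y`-size bias distribution (with respect to the probability measure `P`):
`E[Y f(Y)] = E[Y] ⬝ E[f(Ys)]` for all bounded measurable `f`. -/
def HasSizeBiasedDistribution {Ω : Type*} [MeasurableSpace Ω] (P : Measure Ω)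
    (Y Ys : Ω → ℝ) : Prop :=
  ∀ f : ℝ → ℝ, Measurable f → (∃ C : ℝ, ∀ x, |f x| ≤ C) →
    ∫ ω, Y ω * f (Y ω) ∂P = (∫ ω, Y ω ∂P) * ∫ ω, f (Ys ω) ∂P

/-- Left tail bound from a bounded size bias coupling. -/
theorem left_tail_of_bounded_size_bias_coupling
    {Ω : Type*} [MeasurableSpace Ω] (P : Measure Ω) [IsProbabilityMeasure P]
    (Y Ys : Ω → ℝ) (hYnonneg : ∀ᵐ ω ∂P, 0 ≤ Y ω) (hYint : Integrable Y P)
    (μ : ℝ) (hμ : μ = ∫ ω, Y ω ∂P) (hμne : μ ≠ 0)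
    (c : ℝ) (hc : 0 < c)
    (hsb : HasSizeBiasedDistribution P Y Ys)
    (hbdd : ∀ᵐ ω ∂P, |Ys ω - Y ω| ≤ c) :
    ∀ t : ℝ, 0 < t →
      (P {ω | Y ω - μ ≤ -t}).toReal ≤ Real.exp (-t ^ 2 / (2 * c * μ)) := by
  have hμpos : 0 < μ := lt_of_le_of_ne (hμ ▸ integral_nonneg_of_ae hYnonneg) (Ne.symm hμne)
  -- exponential moments
  have hint : ∀ θ : ℝ, θ ≤ 0 → Integrable (fun ω => Real.exp (θ * Y ω)) P := by
    intro θ hθ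
    refine Integrable.of_bound
      (Real.measurable_exp.comp_aemeasurable
        (hYint.aemeasurable.const_mul θ)).aestronglyMeasurable 1 ?_
    filter_upwards [hYnonneg] with ω hω
    rw [Real.norm_eq_abs, abs_of_pos (Real.exp_pos _)]
    exact Real.exp_le_one_iff.mpr (mul_nonpos_of_nonpos_of_nonneg hθ hω)
  have hderiv : ∀ θ : ℝ, θ < 0 →
      HasDerivAt (ProbabilityTheory.mgf Y P) (∫ ω, Y ω * Real.exp (θ * Y ω) ∂P) θ := by
    intro θ hθ
    refine ProbabilityTheory.hasDerivAt_mgf ?_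
    refine mem_interior.mpr ⟨Set.Iio 0, ?_, isOpen_Iio, hθ⟩
    intro s hs
    exact hint s (le_of_lt hs)
  have hcont : ContinuousOn (ProbabilityTheory.mgf Y P) (Set.Iic 0) := by
    unfold ProbabilityTheory.mgf
    refine continuousOn_of_dominated (bound := fun _ => 1) ?_ ?_ (integrable_const 1) ?_
    · intro θ hθ
      exact (hint θ hθ).aestronglyMeasurable
    · intro θ hθ
      filter_upwards [hYnonneg] with ω hω
      rw [Real.norm_eq_abs, abs_of_pos (Real.exp_pos _)]
      exact Real.exp_le_one_iff.mpr (mul_nonpos_of_nonpos_of_nonneg hθ hω)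
    · refine Filter.Eventually.of_forall fun ω => ?_
      fun_prop
  -- the key differential inequality
  have hkey : ∀ θ : ℝ, θ < 0 →
      μ * (1 + c * θ) * ProbabilityTheory.mgf Y P θ ≤ ∫ ω, Y ω * Real.exp (θ * Y ω) ∂P := by
    intro θ hθ
    have h1 := hsb (fun x => Real.exp (θ * max x 0)) (by fun_prop) ⟨1, fun x => by
      rw [abs_of_pos (Real.exp_pos _)]
      exact Real.exp_le_one_iff.mpr
        (mul_nonpos_of_nonpos_of_nonneg hθ.le (le_max_right _ _))⟩
    have h2 : ∫ ω, Y ω * Real.exp (θ * max (Y ω) 0) ∂P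
        = ∫ ω, Y ω * Real.exp (θ * Y ω) ∂P := by
      refine integral_congr_ae ?_
      filter_upwards [hYnonneg] with ω hω
      rw [max_eq_left hω]
    simp only [h2, ← hμ] at h1
    have hI : Integrable (fun ω => Y ω * Real.exp (θ * Y ω)) P := by
      refine hYint.mono
        (hYint.aestronglyMeasurable.mul (hint θ hθ.le).aestronglyMeasurable) ?_
      filter_upwards [hYnonneg] with ω hω
      rw [norm_mul, Real.norm_eq_abs (Real.exp _), abs_of_pos (Real.exp_pos _)]
      exact mul_le_of_le_one_right (norm_nonneg _)
        (Real.exp_le_one_iff.mpr (mul_nonpos_of_nonpos_of_nonneg hθ.le hω))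
    have hYs : Integrable (fun ω => Real.exp (θ * max (Ys ω) 0)) P := by
      by_contra hn
      rw [integral_undef hn, mul_zero] at h1
      have h3 : (fun ω => Y ω * Real.exp (θ * Y ω)) =ᵐ[P] 0 := by
        refine (integral_eq_zero_iff_of_nonneg_ae ?_ hI).mp h1
        filter_upwards [hYnonneg] with ω hω
        exact mul_nonneg hω (Real.exp_pos _).le
      apply hμne
      rw [hμ]
      refine integral_eq_zero_of_ae ?_
      filter_upwards [h3] with ω hω
      exact (mul_eq_zero.mp hω).resolve_right (Real.exp_pos _).ne'
    rw [h1, mul_assoc]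
    refine mul_le_mul_of_nonneg_left ?_ hμpos.le
    unfold ProbabilityTheory.mgf
    rw [← integral_const_mul]
    refine integral_mono_ae ((hint θ hθ.le).const_mul _) hYs ?_
    filter_upwards [hYnonneg, hbdd] with ω hω hb
    have hb' := abs_le.mp hb
    have hm : max (Ys ω) 0 ≤ Y ω + c := max_le (by linarith) (by linarith)
    calc (1 + c * θ) * Real.exp (θ * Y ω)
        ≤ Real.exp (c * θ) * Real.exp (θ * Y ω) := by
          refine mul_le_mul_of_nonneg_right ?_ (Real.exp_pos _).le
          linarith [Real.add_one_le_exp (c * θ)]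
      _ = Real.exp (θ * (Y ω + c)) := by rw [← Real.exp_add]; ring_nf
      _ ≤ Real.exp (θ * max (Ys ω) 0) :=
          Real.exp_le_exp.mpr (mul_le_mul_of_nonpos_left hm hθ.le)
  have hmono : MonotoneOn (fun θ : ℝ => ProbabilityTheory.mgf Y P θ *
      Real.exp (-(μ * (θ + c * θ ^ 2 / 2)))) (Set.Iic 0) := by
    have hd : ∀ θ : ℝ, θ < 0 → HasDerivAt (fun θ : ℝ => ProbabilityTheory.mgf Y P θ *
        Real.exp (-(μ * (θ + c * θ ^ 2 / 2))))
        ((∫ ω, Y ω * Real.exp (θ * Y ω) ∂P) * Real.exp (-(μ * (θ + c * θ ^ 2 / 2))) +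
          ProbabilityTheory.mgf Y P θ *
          (Real.exp (-(μ * (θ + c * θ ^ 2 / 2))) * (-(μ * (1 + c * θ))))) θ := by
      intro θ hθ
      refine (hderiv θ hθ).mul (HasDerivAt.exp ?_)
      have h := ((((hasDerivAt_id θ).add
        ((((hasDerivAt_id θ).pow 2).const_mul c).div_const 2)).const_mul μ).neg)
      refine HasDerivAt.congr_deriv h ?_
      simp
      left
      ring
    refine monotoneOn_of_deriv_nonneg (convex_Iic 0) (hcont.mul (by fun_prop)) ?_ ?_
    · intro θ hθ
      rw [interior_Iic] at hθ
      exact (hd θ hθ).differentiableAt.differentiableWithinAt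
    · intro θ hθ
      rw [interior_Iic] at hθ
      rw [(hd θ hθ).deriv]
      have := mul_nonneg (sub_nonneg.mpr (hkey θ hθ))
        (Real.exp_pos (-(μ * (θ + c * θ ^ 2 / 2)))).le
      linarith
  intro t ht
  have hθ : -(t / (c * μ)) ≤ 0 := by
    have : 0 < t / (c * μ) := by positivity
    linarith
  have hm := hmono (Set.mem_Iic.mpr hθ) (Set.mem_Iic.mpr le_rfl) hθ
  have hch := ProbabilityTheory.measure_le_le_exp_mul_mgf (μ := P) (X := Y) (μ - t) hθ
    (hint _ hθ)
  have hset : {ω | Y ω - μ ≤ -t} = {ω | Y ω ≤ μ - t} := by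
    ext ω
    simp only [Set.mem_ofPred_eq]
    constructor <;> intro h <;> linarith
  rw [hset]
  simp only [ProbabilityTheory.mgf_zero, Real.exp_neg (μ * _)] at hm
  rw [← div_eq_mul_inv, div_le_iff₀ (Real.exp_pos _)] at hm
  simp only [ne_eq, OfNat.ofNat_ne_zero, not_false_eq_true, zero_pow, mul_zero, zero_div,
    add_zero, Real.exp_zero, inv_one, one_mul, mul_one] at hm
  refine hch.trans ((mul_le_mul_of_nonneg_left hm (Real.exp_pos _).le).trans (le_of_eq ?_))
  rw [← Real.exp_add]
  congr 1
  field_simp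
  ring
end

section
/- Let Y be a nonnegative random variable with finite nonzero mean μ = E[Y], and suppose there exists a random variable Y^s defined on the same probability space having the Y-size bias distribution and satisfying |Y^s − Y| ≤ c almost surely for some constant c > 0. If the moment generating function m(θ) = E[e^{θY}] is finite at θ = 2/c, then for all t > 0, P(Y − μ ≥ t) ≤ exp(−t²/(2cμ + ct)). -/
open MeasureTheory

theorem aux_exp_pade (x : ℝ) (hx : 0 ≤ x) :
    Real.exp x * (2 - x) ≤ 2 + x := by
  have hd : ∀ y : ℝ, HasDerivAt (fun y : ℝ => Real.exp (-y) * (2 + y) - (2 - y))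
      (Real.exp (-y) * (-1) * (2 + y) + Real.exp (-y) * 1 - (-1)) y := by
    intro y
    exact (((hasDerivAt_neg y).exp).mul ((hasDerivAt_id y).const_add 2)).sub
      ((hasDerivAt_id y).const_sub 2)
  have hm : Monotone (fun y : ℝ => Real.exp (-y) * (2 + y) - (2 - y)) := by
    apply monotone_of_deriv_nonneg (fun y => (hd y).differentiableAt)
    intro y
    rw [(hd y).deriv]
    have h1 := Real.add_one_le_exp y
    have h2 : Real.exp (-y) * Real.exp y = 1 := by rw [← Real.exp_add]; simp
    have h3 := Real.exp_pos (-y)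
    nlinarith
  have h := hm hx
  simp only [neg_zero, Real.exp_zero] at h
  have h2 : Real.exp x * Real.exp (-x) = 1 := by rw [← Real.exp_add]; simp
  have h3 := Real.exp_pos x
  have h4 : 0 ≤ Real.exp x * (Real.exp (-x) * (2 + x) - (2 - x)) :=
    mul_nonneg h3.le (by linarith)
  have h5 : Real.exp x * (Real.exp (-x) * (2 + x) - (2 - x))
      = (2 + x) - Real.exp x * (2 - x) := by
    linear_combination (2 + x) * h2
  linarith

theorem aux_deriv_bound
    {Ω : Type*} [MeasurableSpace Ω] (P : Measure Ω) [IsProbabilityMeasure P]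
    (Y Ys : Ω → ℝ) (hYnonneg : ∀ᵐ ω ∂P, 0 ≤ Y ω) (hYint : Integrable Y P)
    (c : ℝ) (hsb : HasSizeBiasedDistribution P Y Ys)
    (hbdd : ∀ᵐ ω ∂P, |Ys ω - Y ω| ≤ c) (θ : ℝ) (hθ : 0 ≤ θ)
    (h1 : Integrable (fun ω => Real.exp (θ * Y ω)) P)
    (h2 : Integrable (fun ω => Y ω * Real.exp (θ * Y ω)) P) :
    ∫ ω, Y ω * Real.exp (θ * Y ω) ∂P
      ≤ (∫ ω, Y ω ∂P) * (Real.exp (c * θ) * ∫ ω, Real.exp (θ * Y ω) ∂P) := by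
  have hlim : Filter.Tendsto
      (fun n : ℕ => ∫ ω, Y ω * Real.exp (θ * min (Y ω) n) ∂P) Filter.atTop
      (nhds (∫ ω, Y ω * Real.exp (θ * Y ω) ∂P)) := by
    apply tendsto_integral_of_dominated_convergence (fun ω => Y ω * Real.exp (θ * Y ω))
    · intro n
      have hY := hYint.aemeasurable
      exact AEMeasurable.aestronglyMeasurable
        (hY.mul (Real.measurable_exp.comp_aemeasurable
          ((hY.min aemeasurable_const).const_mul θ)))
    · exact h2
    · intro n
      filter_upwards [hYnonneg] with ω hω
      rw [Real.norm_eq_abs, abs_of_nonneg (mul_nonneg hω (Real.exp_pos _).le)]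
      gcongr
      exact min_le_left _ _
    · refine Filter.Eventually.of_forall fun ω => ?_
      apply tendsto_const_nhds.congr'
      obtain ⟨N, hN⟩ := exists_nat_ge (Y ω)
      filter_upwards [Filter.eventually_ge_atTop N] with n hn
      have : Y ω ≤ n := hN.trans (by exact_mod_cast hn)
      rw [min_eq_left this]
  refine le_of_tendsto' hlim fun n => ?_
  have h := hsb (fun y => Real.exp (θ * min y n)) (by fun_prop) ⟨Real.exp (θ * n), fun x => by
    rw [abs_of_pos (Real.exp_pos _)]
    gcongr
    exact min_le_right _ _⟩
  rw [h]
  apply mul_le_mul_of_nonneg_left _ (integral_nonneg_of_ae hYnonneg)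
  rw [← integral_const_mul]
  apply integral_mono_of_nonneg
  · exact Filter.Eventually.of_forall fun ω => (Real.exp_pos _).le
  · exact h1.const_mul _
  · filter_upwards [hbdd] with ω hω
    rw [← Real.exp_add]
    apply Real.exp_le_exp.mpr
    have := (abs_le.mp hω).2
    have h3 : min (Ys ω) (n : ℝ) ≤ c + Y ω := (min_le_left _ _).trans (by linarith)
    nlinarith

/-- Right tail bound from a bounded size bias coupling, assuming the moment
generating function of `Y` is finite at `2 / c`. -/
theorem right_tail_of_bounded_size_bias_coupling
    {Ω : Type*} [MeasurableSpace Ω] (P : Measure Ω) [IsProbabilityMeasure P]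
    (Y Ys : Ω → ℝ) (hYnonneg : ∀ᵐ ω ∂P, 0 ≤ Y ω) (hYint : Integrable Y P)
    (μ : ℝ) (hμ : μ = ∫ ω, Y ω ∂P) (hμne : μ ≠ 0)
    (c : ℝ) (hc : 0 < c)
    (hsb : HasSizeBiasedDistribution P Y Ys)
    (hbdd : ∀ᵐ ω ∂P, |Ys ω - Y ω| ≤ c)
    (hmgf : Integrable (fun ω => Real.exp ((2 / c) * Y ω)) P) :
    ∀ t : ℝ, 0 < t →
      (P {ω | t ≤ Y ω - μ}).toReal ≤ Real.exp (-t ^ 2 / (2 * c * μ + c * t)) := by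
  intro t ht
  have hμ0 : 0 < μ := lt_of_le_of_ne (hμ ▸ integral_nonneg_of_ae hYnonneg) hμne.symm
  have hset : Set.Iic (2 / c) ⊆ ProbabilityTheory.integrableExpSet Y P := by
    intro s hs
    refine hmgf.mono' ?_ ?_
    · exact (Real.measurable_exp.comp_aemeasurable
        (hYint.aemeasurable.const_mul s)).aestronglyMeasurable
    · filter_upwards [hYnonneg] with ω hω
      rw [Real.norm_eq_abs, abs_of_pos (Real.exp_pos _)]
      exact Real.exp_le_exp.mpr (mul_le_mul_of_nonneg_right hs hω)
  have hint : ∀ s, s < 2 / c → s ∈ interior (ProbabilityTheory.integrableExpSet Y P) := by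
    intro s hs
    have := interior_mono hset
    rw [interior_Iic] at this
    exact this hs
  set θ : ℝ := 2 * t / (c * (2 * μ + t)) with hθdef
  have hθ0 : 0 < θ := by positivity
  have hx : c * θ = 2 * t / (2 * μ + t) := by rw [hθdef]; field_simp
  have hx2 : c * θ < 2 := by
    rw [hx, div_lt_iff₀ (by positivity)]; linarith
  have hθ2 : θ < 2 / c := by rw [lt_div_iff₀ hc]; linarith
  -- the mgf bound
  set F : ℝ → ℝ := fun s => ProbabilityTheory.mgf Y P s *
    Real.exp (-(μ * (Real.exp (c * s) - 1) / c)) with hF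
  have hFd : ∀ s, s < 2 / c → HasDerivAt F
      ((∫ ω, Y ω * Real.exp (s * Y ω) ∂P) * Real.exp (-(μ * (Real.exp (c * s) - 1) / c))
        + ProbabilityTheory.mgf Y P s *
          (Real.exp (-(μ * (Real.exp (c * s) - 1) / c)) * (-(μ * Real.exp (c * s))))) s := by
    intro s hs
    have hm := ProbabilityTheory.hasDerivAt_mgf (hint s hs)
    refine hm.mul (HasDerivAt.exp ?_)
    have h0 : HasDerivAt (fun s : ℝ => c * s) c s := by
      simpa using (hasDerivAt_id s).const_mul c
    have h1 := (((h0.exp.sub_const 1).const_mul μ).div_const c).neg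
    have e : -(μ * Real.exp (c * s)) = -(μ * (Real.exp (c * s) * c) / c) := by
      field_simp
    rw [e]
    exact h1
  have hanti : AntitoneOn F (Set.Icc 0 θ) := by
    apply antitoneOn_of_deriv_nonpos (convex_Icc 0 θ)
    · intro s hs
      exact (hFd s (lt_of_le_of_lt hs.2 hθ2)).continuousAt.continuousWithinAt
    · rw [interior_Icc]
      intro s hs
      exact (hFd s (hs.2.trans hθ2)).differentiableAt.differentiableWithinAt
    · rw [interior_Icc]
      intro s hs
      have hs2 := hs.2.trans hθ2
      rw [(hFd s hs2).deriv]
      have h2 : Integrable (fun ω => Y ω * Real.exp (s * Y ω)) P := by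
        simpa using ProbabilityTheory.integrable_pow_mul_exp_of_mem_interior_integrableExpSet
          (hint s hs2) 1
      have hb := aux_deriv_bound P Y Ys hYnonneg hYint c hsb hbdd s hs.1.le
        (hset hs2.le) h2
      rw [← hμ] at hb
      have hb' : ∫ ω, Y ω * Real.exp (s * Y ω) ∂P
          ≤ μ * (Real.exp (c * s) * ProbabilityTheory.mgf Y P s) := hb
      have hE := Real.exp_pos (-(μ * (Real.exp (c * s) - 1) / c))
      have := mul_le_mul_of_nonneg_right hb' hE.le
      linarith
  have hF0 : F θ ≤ 1 := by
    have := hanti (Set.left_mem_Icc.mpr hθ0.le) (Set.right_mem_Icc.mpr hθ0.le) hθ0.le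
    simpa [hF] using this
  have hmb : ProbabilityTheory.mgf Y P θ ≤ Real.exp (μ * (Real.exp (c * θ) - 1) / c) := by
    simp only [hF, Real.exp_neg] at hF0
    rwa [← div_eq_mul_inv, div_le_one (Real.exp_pos _)] at hF0
  have hch := ProbabilityTheory.measure_ge_le_exp_mul_mgf (μ := P) (X := Y) (μ + t) hθ0.le
    (hset hθ2.le)
  have hs : {ω | t ≤ Y ω - μ} = {ω | μ + t ≤ Y ω} := by
    ext ω; simp only [Set.mem_setOf_eq]; constructor <;> intro h <;> linarith
  rw [hs]
  refine hch.trans ((mul_le_mul_of_nonneg_left hmb (Real.exp_pos _).le).trans ?_)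
  rw [← Real.exp_add]
  apply Real.exp_le_exp.mpr
  have hp := aux_exp_pade (c * θ) (by positivity)
  have h2x : 2 - c * θ = 4 * μ / (2 * μ + t) := by rw [hx]; field_simp; ring
  have h2x' : 2 + c * θ = (4 * μ + 4 * t) / (2 * μ + t) := by rw [hx]; field_simp; ring
  have he : μ * Real.exp (c * θ) ≤ μ + t := by
    rw [h2x, h2x', mul_div_assoc', div_le_div_iff_of_pos_right (by positivity)] at hp
    linarith
  calc -θ * (μ + t) + μ * (Real.exp (c * θ) - 1) / c
      ≤ -θ * (μ + t) + t / c := by gcongr; linarith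
    _ = -t ^ 2 / (2 * c * μ + c * t) := by rw [hθdef]; field_simp; ring
end

section
/- Let Y be a nonnegative random variable with finite nonzero mean μ = E[Y], and suppose there exists a random variable Y^s defined on the same probability space having the Y-size bias distribution and satisfying Y^s ≤ Y + c almost surely for some constant c > 0. Then max{ sup_{t ≥ 0} P(Y − μ ≥ t), sup_{−μ ≤ t ≤ 0} P(Y − μ ≤ t) } ≤ (μ/(μ+t))^{(t+μ)/c} · e^{t/c}, i.e. for every t ≥ 0, P(Y − μ ≥ t) ≤ (μ/(μ+t))^{(t+μ)/c} e^{t/c}, and for every t with −μ ≤ t ≤ 0, P(Y − μ ≤ t) ≤ (μ/(μ+t))^{(t+μ)/c} e^{t/c}. -/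
open MeasureTheory

open ProbabilityTheory

lemma aux_gdef (m : ℝ → ℝ) (m' μ c θ : ℝ) (hc : 0 < c) (h : HasDerivAt m m' θ) :
    HasDerivAt (fun x => m x * Real.exp (-(μ * Real.exp (x * c) / c)))
      ((m' - μ * Real.exp (θ * c) * m θ) * Real.exp (-(μ * Real.exp (θ * c) / c))) θ := by
  have h1 : HasDerivAt (fun x : ℝ => Real.exp (x * c)) (Real.exp (θ * c) * (1 * c)) θ :=
    ((hasDerivAt_id θ).mul_const c).exp
  have h2 := (((h1.const_mul μ).div_const c).neg).exp
  refine (h.mul h2).congr_deriv ?_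
  simp only [Pi.neg_apply]
  field_simp
  ring

lemma aux_final (μ c m θ : ℝ)
    (h : m * Real.exp (-(μ * Real.exp (θ * c) / c)) ≤ Real.exp (-(μ / c))) :
    m ≤ Real.exp (μ * (Real.exp (θ * c) - 1) / c) := by
  have h1 := mul_le_mul_of_nonneg_right h (Real.exp_pos (μ * Real.exp (θ * c) / c)).le
  rw [mul_assoc, ← Real.exp_add, ← Real.exp_add] at h1
  simp only [neg_add_cancel, Real.exp_zero, mul_one] at h1
  refine h1.trans (le_of_eq ?_)
  congr 1
  ring

lemma aux_upper {Ω : Type*} [MeasurableSpace Ω] (P : Measure Ω) [IsProbabilityMeasure P]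
    (Y Ys : Ω → ℝ) (hYnonneg : ∀ᵐ ω ∂P, 0 ≤ Y ω) (hYint : Integrable Y P)
    (μ : ℝ) (hμ : μ = ∫ ω, Y ω ∂P) (hμpos : 0 < μ)
    (c : ℝ) (hc : 0 < c)
    (hsb : HasSizeBiasedDistribution P Y Ys)
    (hbdd : ∀ᵐ ω ∂P, Ys ω ≤ Y ω + c) (M : ℝ) (hM : 0 ≤ M) (θ : ℝ) (hθ : 0 ≤ θ) :
    mgf (fun ω => min (Y ω) M) P θ ≤ Real.exp (μ * (Real.exp (θ * c) - 1) / c) := by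
  have hZm : AEMeasurable (fun ω => min (Y ω) M) P :=
    hYint.aemeasurable.min aemeasurable_const
  have hint : ∀ x : ℝ, Integrable (fun ω => Real.exp (x * min (Y ω) M)) P := by
    intro x
    refine Integrable.of_bound (Real.measurable_exp.comp_aemeasurable
      (hZm.const_mul x)).aestronglyMeasurable (Real.exp (|x| * M)) ?_
    filter_upwards [hYnonneg] with ω hω
    rw [Real.norm_eq_abs, Real.abs_exp, Real.exp_le_exp]
    have h1 : 0 ≤ min (Y ω) M := le_min hω hM
    calc x * min (Y ω) M ≤ |x| * min (Y ω) M := by gcongr; exact le_abs_self x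
      _ ≤ |x| * M := by gcongr; exact min_le_right _ _
  have hset : integrableExpSet (fun ω => min (Y ω) M) P = Set.univ :=
    Set.eq_univ_of_forall hint
  have hd : ∀ x : ℝ, HasDerivAt (mgf (fun ω => min (Y ω) M) P)
      (∫ ω, min (Y ω) M * Real.exp (x * min (Y ω) M) ∂P) x := by
    intro x
    exact hasDerivAt_mgf (by rw [hset]; simp)
  have hle : ∀ x : ℝ, 0 ≤ x → (∫ ω, min (Y ω) M * Real.exp (x * min (Y ω) M) ∂P) ≤
      μ * Real.exp (x * c) * mgf (fun ω => min (Y ω) M) P x := by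
    intro x hx
    have hb : ∀ y : ℝ, |Real.exp (x * min y M)| ≤ Real.exp (x * M) := by
      intro y
      rw [Real.abs_exp, Real.exp_le_exp]
      gcongr
      exact min_le_right _ _
    have hs := hsb (fun y => Real.exp (x * min y M)) (by fun_prop) ⟨_, hb⟩
    have h1 : (∫ ω, min (Y ω) M * Real.exp (x * min (Y ω) M) ∂P) ≤
        ∫ ω, Y ω * Real.exp (x * min (Y ω) M) ∂P := by
      refine integral_mono_of_nonneg ?_ ?_ ?_
      · filter_upwards [hYnonneg] with ω hω
        exact mul_nonneg (le_min hω hM) (Real.exp_pos _).le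
      · exact hYint.mul_bdd (c := Real.exp (x * M)) (hint x).aestronglyMeasurable
          (Filter.Eventually.of_forall fun ω => hb (Y ω))
      · refine Filter.Eventually.of_forall fun ω => ?_
        exact mul_le_mul_of_nonneg_right (min_le_left _ _) (Real.exp_pos _).le
    have h2 : ∫ ω, Real.exp (x * min (Ys ω) M) ∂P ≤
        ∫ ω, Real.exp (x * c) * Real.exp (x * min (Y ω) M) ∂P := by
      refine integral_mono_of_nonneg ?_ ((hint x).const_mul _) ?_
      · exact Filter.Eventually.of_forall fun ω => (Real.exp_pos _).le
      · filter_upwards [hbdd] with ω hω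
        rw [← Real.exp_add, Real.exp_le_exp, ← mul_add]
        refine mul_le_mul_of_nonneg_left ?_ hx
        rcases le_total (Y ω) M with h | h
        · rw [min_eq_left h]; exact (min_le_left _ _).trans (by linarith)
        · rw [min_eq_right h]; exact (min_le_right _ _).trans (by linarith)
    rw [integral_const_mul] at h2
    calc _ ≤ _ := h1
      _ = μ * ∫ ω, Real.exp (x * min (Ys ω) M) ∂P := by rw [hs, hμ]
      _ ≤ μ * (Real.exp (x * c) * ∫ ω, Real.exp (x * min (Y ω) M) ∂P) := by gcongr
      _ = _ := by rw [mul_assoc]; rfl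
  have hD := fun x => aux_gdef _ _ μ c x hc (hd x)
  have hanti := antitoneOn_of_deriv_nonpos (convex_Ici (0:ℝ))
    (fun x _ => (hD x).continuousAt.continuousWithinAt)
    (fun x _ => (hD x).differentiableAt.differentiableWithinAt)
    (by
      intro x hx
      rw [interior_Ici] at hx
      rw [(hD x).deriv]
      exact mul_nonpos_of_nonpos_of_nonneg (sub_nonpos.2 (hle x (le_of_lt hx)))
        (Real.exp_pos _).le)
  have := hanti (Set.mem_Ici.2 le_rfl) (Set.mem_Ici.2 hθ) hθ
  apply aux_final
  simpa [mgf_zero] using this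

lemma aux_lower {Ω : Type*} [MeasurableSpace Ω] (P : Measure Ω) [IsProbabilityMeasure P]
    (Y Ys : Ω → ℝ) (hYnonneg : ∀ᵐ ω ∂P, 0 ≤ Y ω) (hYint : Integrable Y P)
    (μ : ℝ) (hμ : μ = ∫ ω, Y ω ∂P) (hμpos : 0 < μ)
    (c : ℝ) (hc : 0 < c)
    (hsb : HasSizeBiasedDistribution P Y Ys)
    (hbdd : ∀ᵐ ω ∂P, Ys ω ≤ Y ω + c) (θ : ℝ) (hθ : θ ≤ 0) :
    Integrable (fun ω => Real.exp (θ * Y ω)) P ∧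
    mgf Y P θ ≤ Real.exp (μ * (Real.exp (θ * c) - 1) / c) := by
  have hm : ∀ x : ℝ, AEStronglyMeasurable (fun ω => Real.exp (x * Y ω)) P := fun x =>
    (Real.measurable_exp.comp_aemeasurable
      (hYint.aemeasurable.const_mul x)).aestronglyMeasurable
  have hb1 : ∀ x : ℝ, x ≤ 0 → ∀ᵐ ω ∂P, ‖Real.exp (x * Y ω)‖ ≤ 1 := by
    intro x hx
    filter_upwards [hYnonneg] with ω hω
    rw [Real.norm_eq_abs, Real.abs_exp, Real.exp_le_one_iff]
    exact mul_nonpos_of_nonpos_of_nonneg hx hω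
  have hint : ∀ x : ℝ, x ≤ 0 → Integrable (fun ω => Real.exp (x * Y ω)) P := fun x hx =>
    Integrable.of_bound (hm x) 1 (hb1 x hx)
  have hsub : Set.Iic 0 ⊆ integrableExpSet Y P := fun x hx => hint x hx
  have hd : ∀ x : ℝ, x < 0 → HasDerivAt (mgf Y P)
      (∫ ω, Y ω * Real.exp (x * Y ω) ∂P) x := by
    intro x hx
    refine hasDerivAt_mgf (interior_mono hsub ?_)
    rw [interior_Iic]; exact hx
  have hcont : ContinuousOn (mgf Y P) (Set.Iic 0) := by
    refine continuousOn_of_dominated (bound := fun _ => 1) (fun x _ => hm x)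
      (fun x hx => hb1 x hx) (integrable_const _) ?_
    exact Filter.Eventually.of_forall fun ω => by fun_prop
  have hle : ∀ x : ℝ, x ≤ 0 →  μ * Real.exp (x * c) * mgf Y P x ≤
      (∫ ω, Y ω * Real.exp (x * Y ω) ∂P) := by
    intro x hx
    have hb : ∀ y : ℝ, |Real.exp (x * max y 0)| ≤ 1 := by
      intro y
      rw [Real.abs_exp, Real.exp_le_one_iff]
      exact mul_nonpos_of_nonpos_of_nonneg hx (le_max_right _ _)
    have hs := hsb (fun y => Real.exp (x * max y 0)) (by fun_prop) ⟨_, hb⟩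
    have h1 : (∫ ω, Y ω * Real.exp (x * max (Y ω) 0) ∂P) =
        ∫ ω, Y ω * Real.exp (x * Y ω) ∂P := by
      refine integral_congr_ae ?_
      filter_upwards [hYnonneg] with ω hω
      rw [max_eq_left hω]
    simp only [h1] at hs
    have hYf : Integrable (fun ω => Y ω * Real.exp (x * Y ω)) P :=
      hYint.mul_bdd (c := 1) (hm x) (hb1 x hx)
    have hI : Integrable (fun ω => Real.exp (x * max (Ys ω) 0)) P := by
      by_contra hn
      rw [integral_undef hn, mul_zero] at hs
      have h0 := (integral_eq_zero_iff_of_nonneg_ae (by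
        filter_upwards [hYnonneg] with ω hω
        exact mul_nonneg hω (Real.exp_pos _).le) hYf).1 hs
      have : ∫ ω, Y ω ∂P = 0 := by
        refine integral_eq_zero_of_ae ?_
        filter_upwards [h0] with ω hω
        exact (mul_eq_zero.1 hω).resolve_right (Real.exp_pos _).ne'
      rw [← hμ] at this
      exact hμpos.ne' this
    have h2 : ∫ ω, Real.exp (x * c) * Real.exp (x * Y ω) ∂P ≤
        ∫ ω, Real.exp (x * max (Ys ω) 0) ∂P := by
      refine integral_mono_ae ((hint x hx).const_mul _) hI ?_
      filter_upwards [hbdd, hYnonneg] with ω hω hω0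
      rw [← Real.exp_add, Real.exp_le_exp, ← mul_add]
      exact mul_le_mul_of_nonpos_left (max_le (by linarith) (by linarith)) hx
    rw [integral_const_mul] at h2
    rw [hs, ← hμ, mul_assoc]
    exact mul_le_mul_of_nonneg_left h2 hμpos.le
  refine ⟨hint θ hθ, ?_⟩
  have hD := fun x hx => aux_gdef _ _ μ c x hc (hd x hx)
  have hmono := monotoneOn_of_deriv_nonneg (convex_Iic (0:ℝ))
    (f := fun x => mgf Y P x * Real.exp (-(μ * Real.exp (x * c) / c)))
    (hcont.mul (by fun_prop))
    (fun x hx => by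
      rw [interior_Iic] at hx
      exact (hD x hx).differentiableAt.differentiableWithinAt)
    (by
      intro x hx
      rw [interior_Iic] at hx
      rw [(hD x hx).deriv]
      exact mul_nonneg (sub_nonneg.2 (hle x (le_of_lt hx))) (Real.exp_pos _).le)
  have := hmono (Set.mem_Iic.2 hθ) (Set.mem_Iic.2 le_rfl) hθ
  apply aux_final
  simpa [mgf_zero] using this

lemma aux_opt (μ c t : ℝ) (hμ : 0 < μ) (hc : 0 < c) (ht : 0 < μ + t) (m : ℝ)
    (hm : m ≤ Real.exp (μ * (Real.exp (Real.log ((μ + t) / μ) / c * c) - 1) / c)) :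
    Real.exp (-(Real.log ((μ + t) / μ) / c) * (μ + t)) * m ≤
      (μ / (μ + t)) ^ ((t + μ) / c) * Real.exp (t / c) := by
  rw [div_mul_cancel₀ _ hc.ne', Real.exp_log (by positivity)] at hm
  refine (mul_le_mul_of_nonneg_left hm (Real.exp_pos _).le).trans (le_of_eq ?_)
  rw [Real.rpow_def_of_pos (by positivity)]
  congr 2
  · rw [← inv_div (μ + t) μ, Real.log_inv]; ring
  · field_simp; ring

/-- Sub-Poisson two-sided bound from a size bias coupling bounded above:
if `Ys ≤ Y + c` a.s. then both tails of `Y - μ` satisfy the bound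
`(μ/(μ+t))^((t+μ)/c) e^(t/c)`. -/
theorem tails_of_upper_bounded_size_bias_coupling
    {Ω : Type*} [MeasurableSpace Ω] (P : Measure Ω) [IsProbabilityMeasure P]
    (Y Ys : Ω → ℝ) (hYnonneg : ∀ᵐ ω ∂P, 0 ≤ Y ω) (hYint : Integrable Y P)
    (μ : ℝ) (hμ : μ = ∫ ω, Y ω ∂P) (hμne : μ ≠ 0)
    (c : ℝ) (hc : 0 < c)
    (hsb : HasSizeBiasedDistribution P Y Ys)
    (hbdd : ∀ᵐ ω ∂P, Ys ω ≤ Y ω + c) :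
    (∀ t : ℝ, 0 ≤ t →
      (P {ω | t ≤ Y ω - μ}).toReal ≤ (μ / (μ + t)) ^ ((t + μ) / c) * Real.exp (t / c)) ∧
    (∀ t : ℝ, -μ ≤ t → t ≤ 0 →
      (P {ω | Y ω - μ ≤ t}).toReal ≤ (μ / (μ + t)) ^ ((t + μ) / c) * Real.exp (t / c)) := by
  have hμpos : 0 < μ :=
    lt_of_le_of_ne (hμ ▸ integral_nonneg_of_ae hYnonneg) hμne.symm
  refine ⟨fun t ht => ?_, fun t ht1 ht2 => ?_⟩
  · have hpos : 0 < μ + t := by linarith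
    set θ := Real.log ((μ + t) / μ) / c with hθdef
    have hθ : 0 ≤ θ := by
      refine div_nonneg (Real.log_nonneg ?_) hc.le
      rw [le_div_iff₀ hμpos]; linarith
    have hm := aux_upper P Y Ys hYnonneg hYint μ hμ hμpos c hc hsb hbdd (μ + t) hpos.le θ hθ
    have hint : Integrable (fun ω => Real.exp (θ * min (Y ω) (μ + t))) P := by
      refine Integrable.of_bound (Real.measurable_exp.comp_aemeasurable
        ((hYint.aemeasurable.min aemeasurable_const).const_mul θ)).aestronglyMeasurable
        (Real.exp (θ * (μ + t))) (Filter.Eventually.of_forall fun ω => ?_)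
      rw [Real.norm_eq_abs, Real.abs_exp, Real.exp_le_exp]
      exact mul_le_mul_of_nonneg_left (min_le_right _ _) hθ
    have hch := measure_ge_le_exp_mul_mgf (μ + t) hθ hint
    have hset : {ω | t ≤ Y ω - μ} = {ω | μ + t ≤ min (Y ω) (μ + t)} := by
      ext ω
      simp only [Set.mem_setOf_eq, le_min_iff, le_refl, and_true]
      constructor <;> intro h <;> linarith
    rw [hset]
    exact hch.trans (aux_opt μ c t hμpos hc hpos _ hm)
  · have hset : {ω | Y ω - μ ≤ t} = {ω | Y ω ≤ μ + t} := by
      ext ω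
      simp only [Set.mem_setOf_eq]
      constructor <;> intro h <;> linarith
    rw [hset]
    rcases ht1.eq_or_lt with h | h
    · have h0 : μ + t = 0 := by linarith
      have h0' : t + μ = 0 := by linarith
      rw [h0, h0', zero_div, Real.rpow_zero, one_mul]
      have hb : ∀ θ : ℝ, θ ≤ 0 → (P {ω | Y ω ≤ 0}).toReal ≤
          Real.exp (μ * (Real.exp (θ * c) - 1) / c) := by
        intro θ hθ
        obtain ⟨hi, hm⟩ := aux_lower P Y Ys hYnonneg hYint μ hμ hμpos c hc hsb hbdd θ hθ
        have hch := measure_le_le_exp_mul_mgf 0 hθ hi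
        rw [mul_zero, Real.exp_zero, one_mul] at hch
        exact hch.trans hm
      have hlim : Filter.Tendsto (fun θ : ℝ => Real.exp (μ * (Real.exp (θ * c) - 1) / c))
          Filter.atBot (nhds (Real.exp (μ * (0 - 1) / c))) := by
        refine (Real.continuous_exp.tendsto _).comp ?_
        refine Filter.Tendsto.div_const (Filter.Tendsto.const_mul _ ?_) _
        refine Filter.Tendsto.sub_const ?_ _
        exact Real.tendsto_exp_atBot.comp (Filter.tendsto_id.atBot_mul_const hc)
      have := ge_of_tendsto hlim ((Filter.eventually_le_atBot 0).mono hb)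
      refine this.trans (le_of_eq ?_)
      rw [← h]; ring_nf
    · have hpos : 0 < μ + t := by linarith
      set θ := Real.log ((μ + t) / μ) / c with hθdef
      have hθ : θ ≤ 0 := by
        refine div_nonpos_of_nonpos_of_nonneg (Real.log_nonpos (by positivity) ?_) hc.le
        rw [div_le_iff₀ hμpos]; linarith
      obtain ⟨hi, hm⟩ := aux_lower P Y Ys hYnonneg hYint μ hμ hμpos c hc hsb hbdd θ hθ
      exact (measure_le_le_exp_mul_mgf (μ + t) hθ hi).trans
        (aux_opt μ c t hμpos hc hpos _ hm)
end

section
/- Let Y be a nonnegative random variable with finite nonzero mean μ = E[Y], and suppose there exists a random variable Y^s defined on the same probability space having the Y-size bias distribution and satisfying Y^s ≤ Y + c almost surely for some constant c > 0. Then for all t > 0, P(Y − μ ≥ t) ≤ exp(−t²/(2cμ + 2ct/3)). -/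
open MeasureTheory

lemma aux_bennett_bernstein (u : ℝ) (hu : 0 ≤ u) :
    3 * u ^ 2 / (6 + 2 * u) ≤ (1 + u) * Real.log (1 + u) - u := by
  have hd : ∀ v : ℝ, 0 ≤ v → HasDerivAt
      (fun v : ℝ => (1 + v) * Real.log (1 + v) - v - 3 * v ^ 2 / (6 + 2 * v))
      (Real.log (1 + v) - (36 * v + 6 * v ^ 2) / (6 + 2 * v) ^ 2) v := by
    intro v hv
    have h1 : HasDerivAt (fun v : ℝ => 1 + v) 1 v := (hasDerivAt_id v).const_add 1
    have hne : (1 + v) ≠ 0 := by positivity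
    have hne2 : (6 + 2 * v) ≠ 0 := by positivity
    have h2 := h1.log hne
    have h3 : HasDerivAt (fun v : ℝ => 6 + 2 * v) (2 * 1) v :=
      ((hasDerivAt_id v).const_mul 2).const_add 6
    have h4 : HasDerivAt (fun v : ℝ => 3 * v ^ 2) (3 * (2 * v)) v := by
      simpa using (hasDerivAt_pow 2 v).const_mul 3
    have h5 := ((h1.mul h2).sub (hasDerivAt_id v)).sub (h4.div h3 hne2)
    refine h5.congr_deriv ?_
    field_simp
    ring
  have hmono : MonotoneOn
      (fun v : ℝ => (1 + v) * Real.log (1 + v) - v - 3 * v ^ 2 / (6 + 2 * v)) (Set.Ici 0) := by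
    apply monotoneOn_of_deriv_nonneg (convex_Ici 0)
    · intro v hv
      exact (hd v hv).continuousAt.continuousWithinAt
    · intro v hv
      rw [interior_Ici] at hv
      exact (hd v (le_of_lt hv)).differentiableAt.differentiableWithinAt
    · intro v hv
      rw [interior_Ici] at hv
      have hv0 : 0 < v := hv
      rw [(hd v hv0.le).deriv]
      have h := Real.le_log_one_add_of_nonneg hv0.le
      have h2 : (36 * v + 6 * v ^ 2) / (6 + 2 * v) ^ 2 ≤ 2 * v / (v + 2) := by
        rw [div_le_div_iff₀ (by positivity) (by positivity)]
        have : 0 < v ^ 3 := by positivity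
        nlinarith
      linarith
  have := hmono (Set.mem_Ici.2 le_rfl) (Set.mem_Ici.2 hu) hu
  simp at this
  linarith

/-- Bennett-type bound from the recursion on tails. -/
lemma aux_recursion (F : ℝ → ℝ) (μ c : ℝ) (hμ : 0 < μ) (hc : 0 < c)
    (hF1 : ∀ x, F x ≤ 1) (hrec : ∀ x, x * F x ≤ μ * F (x - c)) (n : ℕ) :
    ∀ x, μ ≤ x → x ≤ μ + (n + 1) * c →
      F x ≤ Real.exp (-((x * Real.log (x / μ) - x + μ) / c)) := by
  have key : ∀ x, μ ≤ x → ∀ a, F (x - c) ≤ Real.exp (-a) →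
      (x * Real.log (x / μ) - x + μ) / c ≤ a + Real.log (x / μ) →
      F x ≤ Real.exp (-((x * Real.log (x / μ) - x + μ) / c)) := by
    intro x hx a ha hle
    have hx0 : 0 < x := by linarith
    have h1 : F x ≤ μ / x * Real.exp (-a) := by
      rw [div_mul_eq_mul_div, le_div_iff₀ hx0]
      have := hrec x
      have := mul_le_mul_of_nonneg_left ha hμ.le
      linarith
    have h2 : μ / x = Real.exp (-Real.log (x / μ)) := by
      rw [Real.exp_neg, Real.exp_log (by positivity), inv_div]
    rw [h2, ← Real.exp_add] at h1
    refine h1.trans (Real.exp_le_exp.2 ?_)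
    linarith
  have base : ∀ x, μ ≤ x → x ≤ μ + c →
      F x ≤ Real.exp (-((x * Real.log (x / μ) - x + μ) / c)) := by
    intro x hx hxc
    have hx0 : 0 < x := by linarith
    refine key x hx 0 (by simpa using hF1 _) ?_
    rw [zero_add, div_le_iff₀ hc]
    have hl := Real.log_le_sub_one_of_pos (show 0 < x / μ by positivity)
    have hl0 : 0 ≤ Real.log (x / μ) := Real.log_nonneg ((one_le_div hμ).2 hx)
    have h1 : μ * Real.log (x / μ) ≤ x - μ := by
      have := mul_le_mul_of_nonneg_left hl hμ.le
      have e : μ * (x / μ - 1) = x - μ := by field_simp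
      linarith
    nlinarith
  induction n with
  | zero => intro x hx hxc; exact base x hx (by simpa using hxc)
  | succ k ih =>
    intro x hx hxc
    rcases le_total x (μ + c) with h | h
    · exact base x hx h
    have hx0 : 0 < x := by linarith
    have hy0 : 0 < x - c := by linarith
    refine key x hx _ (ih (x - c) (by linarith) (by push_cast at hxc; linarith)) ?_
    have hl := Real.log_le_sub_one_of_pos (show 0 < x / (x - c) by positivity)
    have h1 : (x - c) * Real.log (x / (x - c)) ≤ c := by
      have := mul_le_mul_of_nonneg_left hl hy0.le
      have e : (x - c) * (x / (x - c) - 1) = c := by field_simp; ring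
      linarith
    rw [Real.log_div hx0.ne' hy0.ne'] at h1
    rw [Real.log_div hx0.ne' hμ.ne', Real.log_div hy0.ne' hμ.ne', div_le_iff₀ hc, add_mul,
      div_mul_cancel₀ _ hc.ne']
    nlinarith

/-- Bernstein-type right tail bound from a size bias coupling bounded above. -/
theorem bernstein_tail_of_upper_bounded_size_bias_coupling
    {Ω : Type*} [MeasurableSpace Ω] (P : Measure Ω) [IsProbabilityMeasure P]
    (Y Ys : Ω → ℝ) (hYnonneg : ∀ᵐ ω ∂P, 0 ≤ Y ω) (hYint : Integrable Y P)
    (μ : ℝ) (hμ : μ = ∫ ω, Y ω ∂P) (hμne : μ ≠ 0)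
    (c : ℝ) (hc : 0 < c)
    (hsb : HasSizeBiasedDistribution P Y Ys)
    (hbdd : ∀ᵐ ω ∂P, Ys ω ≤ Y ω + c) :
    ∀ t : ℝ, 0 < t →
      (P {ω | t ≤ Y ω - μ}).toReal ≤ Real.exp (-t ^ 2 / (2 * c * μ + 2 * c * t / 3)) := by
  intro t ht
  have hμ0 : 0 < μ := lt_of_le_of_ne (hμ ▸ integral_nonneg_of_ae hYnonneg) hμne.symm
  let g : ℝ → ℝ → ℝ := fun x => (Set.Ici x).indicator (fun _ => (1 : ℝ))
  have hgm : ∀ x, Measurable (g x) := fun x => measurable_const.indicator measurableSet_Ici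
  have hg0 : ∀ x y, 0 ≤ g x y := fun x y => Set.indicator_nonneg (fun _ _ => zero_le_one) y
  have hg1 : ∀ x y, g x y ≤ 1 := fun x y => Set.indicator_le_self' (fun _ _ => zero_le_one) y
  have hgb : ∀ x y, |g x y| ≤ 1 := fun x y => by rw [abs_of_nonneg (hg0 x y)]; exact hg1 x y
  have hgYm : ∀ x, AEStronglyMeasurable (fun ω => g x (Y ω)) P := fun x =>
    ((hgm x).comp_aemeasurable hYint.aemeasurable).aestronglyMeasurable
  have hgi : ∀ x, Integrable (fun ω => g x (Y ω)) P := fun x =>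
    Integrable.of_bound (hgYm x) 1 (Filter.Eventually.of_forall fun ω => hgb x _)
  have hFP : ∀ x, ∫ ω, g x (Y ω) ∂P = (P {ω | x ≤ Y ω}).toReal := by
    intro x
    have hns : NullMeasurableSet {ω | x ≤ Y ω} P :=
      hYint.aemeasurable.nullMeasurableSet_preimage measurableSet_Ici
    have : (fun ω => g x (Y ω)) = {ω | x ≤ Y ω}.indicator (fun _ => (1 : ℝ)) := by
      ext ω; simp [g, Set.indicator]
    rw [this, integral_indicator₀ hns]
    simp [Measure.real]
  have hrec : ∀ x, x * (∫ ω, g x (Y ω) ∂P) ≤ μ * ∫ ω, g (x - c) (Y ω) ∂P := by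
    intro x
    have h1 := hsb (g x) (hgm x) ⟨1, hgb x⟩
    rw [← hμ] at h1
    have h2 : x * (∫ ω, g x (Y ω) ∂P) ≤ ∫ ω, Y ω * g x (Y ω) ∂P := by
      rw [← integral_const_mul]
      refine integral_mono ((hgi x).const_mul x) ?_ ?_
      · exact hYint.mul_bdd (c := 1) (hgYm x) (Filter.Eventually.of_forall fun ω => hgb x _)
      · intro ω
        by_cases h : x ≤ Y ω <;> simp [g, Set.indicator, h]
    have h3 : ∫ ω, g x (Ys ω) ∂P ≤ ∫ ω, g (x - c) (Y ω) ∂P := by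
      refine integral_mono_of_nonneg (Filter.Eventually.of_forall fun ω => hg0 x _) (hgi _) ?_
      filter_upwards [hbdd] with ω hω
      by_cases h : x ≤ Ys ω
      · have : x ≤ Y ω + c := h.trans hω
        simp [g, Set.indicator, h, this]
      · have := hg0 (x - c) (Y ω)
        simpa [g, Set.indicator, h] using this
    have := mul_le_mul_of_nonneg_left h3 hμ0.le
    linarith
  have hF1 : ∀ x, ∫ ω, g x (Y ω) ∂P ≤ 1 := fun x => by
    rw [hFP]; exact measureReal_le_one
  obtain ⟨n, hn⟩ := exists_nat_ge (t / c)
  have hmain := aux_recursion (fun x => ∫ ω, g x (Y ω) ∂P) μ c hμ0 hc hF1 hrec n (μ + t)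
    (by linarith) (by rw [div_le_iff₀ hc] at hn; nlinarith)
  simp only [hFP] at hmain
  have hset : {ω | t ≤ Y ω - μ} = {ω | μ + t ≤ Y ω} := by
    ext ω; simp only [Set.mem_ofPred_eq]; constructor <;> intro h <;> linarith
  rw [hset]
  refine hmain.trans (Real.exp_le_exp.2 ?_)
  have hb := aux_bennett_bernstein (t / μ) (by positivity)
  have e : (μ + t) / μ = 1 + t / μ := by field_simp
  rw [e, neg_div, neg_le_neg_iff, le_div_iff₀ hc]
  have h1 := mul_le_mul_of_nonneg_left hb hμ0.le
  have e1 : μ * (3 * (t / μ) ^ 2 / (6 + 2 * (t / μ))) =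
      t ^ 2 / (2 * c * μ + 2 * c * t / 3) * c := by
    field_simp
    try ring
  have e2 : μ * ((1 + t / μ) * Real.log (1 + t / μ) - t / μ) =
      (μ + t) * Real.log (1 + t / μ) - (μ + t) + μ := by
    field_simp
    try ring
  linarith
end

section
/- Let M be a lattice log concave integer-valued random variable with support S. Then for all x, d ∈ ℤ with x ∈ S, d+1 ∈ S and x ≥ d, one has P(M ≥ x+1) · P(M = d) ≤ P(M ≥ d+1) · P(M = x); equivalently, the quantity π_x^{(d)} = P(M ≥ x+1)P(M = d) / (P(M ≥ d+1)P(M = x)) satisfies 0 ≤ π_x^{(d)} ≤ 1. -/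
open MeasureTheory

/-- The law of a lattice log concave integer valued random variable, presented as a
probability measure `μ` on `ℤ`: the support is an integer interval and the point
masses satisfy `p_{x-1} p_{x+1} ≤ p_x ^ 2`. -/
def IsLatticeLogConcave (μ : Measure ℤ) : Prop :=
  (∀ x y z : ℤ, x ≤ y → y ≤ z → μ {x} ≠ 0 → μ {z} ≠ 0 → μ {y} ≠ 0) ∧
  (∀ x : ℤ, (μ {x - 1}).toReal * (μ {x + 1}).toReal ≤ (μ {x}).toReal ^ 2)

theorem lc_step (p : ℤ → ℝ) (h0 : ∀ x, 0 ≤ p x)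
    (hs : ∀ x y z : ℤ, x ≤ y → y ≤ z → 0 < p x → 0 < p z → 0 < p y)
    (hl : ∀ x, p (x - 1) * p (x + 1) ≤ p x ^ 2) (d y : ℤ) (h : d ≤ y) :
    p (y + 1) * p d ≤ p (d + 1) * p y := by
  induction y, h using Int.leInduction with
  | base => exact le_rfl
  | succ y hy ih =>
    rcases (h0 d).eq_or_lt with hd | hd
    · rw [← hd, mul_zero]; exact mul_nonneg (h0 _) (h0 _)
    rcases (h0 (y + 1 + 1)).eq_or_lt with hz | hz
    · rw [← hz, zero_mul]; exact mul_nonneg (h0 _) (h0 _)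
    have hp : 0 < p y := hs d y (y + 1 + 1) hy (by omega) hd hz
    have h1 := hl (y + 1)
    rw [add_sub_cancel_right] at h1
    have e1 := mul_le_mul_of_nonneg_right h1 hd.le
    have e2 := mul_le_mul_of_nonneg_right ih (h0 (y + 1))
    refine le_of_mul_le_mul_right ?_ hp
    nlinarith

theorem lc_shift (p : ℤ → ℝ) (h0 : ∀ x, 0 ≤ p x)
    (hs : ∀ x y z : ℤ, x ≤ y → y ≤ z → 0 < p x → 0 < p z → 0 < p y)
    (hl : ∀ x, p (x - 1) * p (x + 1) ≤ p x ^ 2) (d x : ℤ) (h : d ≤ x) (k : ℕ) :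
    p (x + k) * p d ≤ p (d + k) * p x := by
  induction k with
  | zero => simp [mul_comm]
  | succ k ih =>
    push_cast
    rw [← add_assoc, ← add_assoc]
    rcases (h0 d).eq_or_lt with hd | hd
    · rw [← hd, mul_zero]; exact mul_nonneg (h0 _) (h0 _)
    rcases (h0 (x + k + 1)).eq_or_lt with hz | hz
    · rw [← hz, zero_mul]; exact mul_nonneg (h0 _) (h0 _)
    have p1 : 0 < p (d + k) := hs d _ (x + k + 1) (by omega) (by omega) hd hz
    have p2 : 0 < p (x + k) := hs d _ (x + k + 1) (by omega) (by omega) hd hz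
    have h1 := lc_step p h0 hs hl (d + k) (x + k) (by omega)
    have e := mul_le_mul h1 ih (mul_nonneg (h0 _) (h0 _)) (mul_nonneg (h0 _) (h0 _))
    refine le_of_mul_le_mul_right ?_ (mul_pos p1 p2)
    nlinarith

theorem measure_Ici_tsum (μ : Measure ℤ) (a : ℤ) :
    μ (Set.Ici (a + 1)) = ∑' k : ℕ, μ {a + ((k + 1 : ℕ) : ℤ)} := by
  have : Set.Ici (a + 1) = ⋃ k : ℕ, {a + ((k + 1 : ℕ) : ℤ)} := by
    ext z
    simp only [Set.mem_Ici, Set.mem_iUnion, Set.mem_singleton_iff]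
    constructor
    · intro h
      exact ⟨(z - a - 1).toNat, by omega⟩
    · rintro ⟨k, hk⟩
      omega
  rw [this, measure_iUnion]
  · intro i j hij
    simp only [Function.onFun, Set.disjoint_singleton]
    omega
  · intro i
    exact measurableSet_singleton _


/-- For a lattice log concave random variable `M`, whenever `x` and `d + 1` lie in the
support and `d ≤ x`, one has `P(M ≥ x+1) P(M = d) ≤ P(M ≥ d+1) P(M = x)`; i.e., the
quantity `π_x^{(d)}` lies in `[0, 1]`. -/
theorem pi_le_one_of_latticeLogConcave (μ : Measure ℤ) [IsProbabilityMeasure μ]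
    (hLC : IsLatticeLogConcave μ) :
    ∀ x d : ℤ, μ {x} ≠ 0 → μ {d + 1} ≠ 0 → d ≤ x →
      (μ (Set.Ici (x + 1))).toReal * (μ {d}).toReal ≤
        (μ (Set.Ici (d + 1))).toReal * (μ {x}).toReal := by
  intro x d _ _ hdx
  have key := lc_shift (fun z => (μ {z}).toReal) (fun _ => ENNReal.toReal_nonneg)
    (fun a b c hab hbc ha hc => by
      have ha' := (ENNReal.toReal_pos_iff.1 ha).1.ne'
      have hc' := (ENNReal.toReal_pos_iff.1 hc).1.ne'
      exact ENNReal.toReal_pos (hLC.1 a b c hab hbc ha' hc') (measure_ne_top _ _))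
    hLC.2 d x hdx
  rw [← ENNReal.toReal_mul, ← ENNReal.toReal_mul]
  refine ENNReal.toReal_mono (ENNReal.mul_ne_top (measure_ne_top _ _) (measure_ne_top _ _)) ?_
  rw [measure_Ici_tsum, measure_Ici_tsum, ← ENNReal.tsum_mul_right, ← ENNReal.tsum_mul_right]
  refine ENNReal.tsum_le_tsum fun k => ?_
  have hk := key (k + 1)
  simp only [← ENNReal.toReal_mul] at hk
  exact (ENNReal.toReal_le_toReal
    (ENNReal.mul_ne_top (measure_ne_top _ _) (measure_ne_top _ _))
    (ENNReal.mul_ne_top (measure_ne_top _ _) (measure_ne_top _ _))).1 hk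
end

section
/- Let M be a lattice log concave integer-valued random variable with support S, let d ∈ ℤ be such that d+1 ∈ S, and let N, Z be random variables on a common probability space such that N has the conditional distribution of M given M ≥ d, and conditionally on N, Z is Bernoulli with success probability π_N^{(d)}. Then N + Z has the conditional distribution of M given M ≥ d+1; that is, P(N + Z ≥ d + k) = P(M ≥ d + k | M ≥ d+1) for all integers k ≥ 1. -/
open MeasureTheory ProbabilityTheory

/-- `π_x^{(d)} = P(M ≥ x+1) P(M = d) / (P(M ≥ d+1) P(M = x))` when `x` and `d+1` are in
the support of `μ` and `x ≥ d`, and `0` otherwise. -/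
noncomputable def piCoef (μ : Measure ℤ) (d x : ℤ) : ℝ :=
  if μ {x} ≠ 0 ∧ μ {d + 1} ≠ 0 ∧ d ≤ x then
    ((μ (Set.Ici (x + 1))).toReal * (μ {d}).toReal) /
      ((μ (Set.Ici (d + 1))).toReal * (μ {x}).toReal)
  else 0

/-- If `N` has the law of a lattice log concave `M` conditioned on `M ≥ d`, with `d+1` in
the support, and given `N` the variable `Z` is Bernoulli with success probability
`π_N^{(d)}`, then `N + Z` has the law of `M` conditioned on `M ≥ d + 1`. -/
theorem add_one_coupling_of_latticeLogConcave (μM : Measure ℤ) [IsProbabilityMeasure μM]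
    (hLC : IsLatticeLogConcave μM) (d : ℤ) (hd1 : μM {d + 1} ≠ 0)
    {Ω : Type*} [MeasurableSpace Ω] (P : Measure Ω) [IsProbabilityMeasure P]
    (N Z : Ω → ℤ) (hNmeas : Measurable N) (hZmeas : Measurable Z)
    (hNlaw : Measure.map N P = μM[|Set.Ici d])
    (hZ01 : ∀ ω, Z ω = 0 ∨ Z ω = 1)
    (hZcond : ∀ n : ℤ, P ({ω | Z ω = 1} ∩ {ω | N ω = n}) =
      ENNReal.ofReal (piCoef μM d n) * P {ω | N ω = n}) :
    Measure.map (fun ω => N ω + Z ω) P = μM[|Set.Ici (d + 1)] := by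
  obtain ⟨hInt, -⟩ := hLC
  have hmeas : Measurable (fun ω => N ω + Z ω) := hNmeas.add hZmeas
  have hcr : ∀ (a : ℤ) (t : Set ℤ), (μM[|Set.Ici a]).real t =
      (μM.real (Set.Ici a))⁻¹ * μM.real (Set.Ici a ∩ t) := by
    intro a t
    rw [measureReal_def, cond_apply measurableSet_Ici, ENNReal.toReal_mul, ENNReal.toReal_inv]
    rfl
  have hg1pos : 0 < μM.real (Set.Ici (d + 1)) := by
    refine ENNReal.toReal_pos ?_ (measure_ne_top _ _)
    intro h
    exact hd1 (measure_mono_null (by intro y hy; simp_all) h)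
  have hgstep : μM.real (Set.Ici d) = μM.real {d} + μM.real (Set.Ici (d + 1)) := by
    rw [← measureReal_union (by simp) (measurableSet_Ici)]
    congr 1
    ext y
    simp only [Set.mem_Ici, Set.mem_union, Set.mem_singleton_iff]
    omega
  have hpd : 0 ≤ μM.real {d} := measureReal_nonneg
  have hgpos : 0 < μM.real (Set.Ici d) := by linarith
  have hNset : ∀ s : Set ℤ, P.real (N ⁻¹' s) =
      (μM.real (Set.Ici d))⁻¹ * μM.real (Set.Ici d ∩ s) := by
    intro s
    have hs : MeasurableSet s := s.to_countable.measurableSet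
    rw [← map_measureReal_apply hNmeas hs, hNlaw, hcr]
  have : IsFiniteMeasure (Measure.map (fun ω => N ω + Z ω) P) := inferInstance
  refine Measure.ext_of_Ici _ _ fun x => ?_
  have htop : μM[|Set.Ici (d + 1)] (Set.Ici x) ≠ ⊤ := measure_ne_top _ _
  rw [← ENNReal.toReal_eq_toReal_iff' (measure_ne_top _ _) htop]
  change (Measure.map (fun ω => N ω + Z ω) P).real (Set.Ici x) =
    (μM[|Set.Ici (d + 1)]).real (Set.Ici x)
  rw [map_measureReal_apply hmeas measurableSet_Ici, hcr]
  have hsplit : P.real ((fun ω => N ω + Z ω) ⁻¹' Set.Ici x) =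
      P.real (N ⁻¹' Set.Ici x) + P.real ({ω | Z ω = 1} ∩ {ω | N ω = x - 1}) := by
    rw [← measureReal_union]
    · congr 1
      ext ω
      have := hZ01 ω
      simp only [Set.mem_preimage, Set.mem_Ici, Set.mem_union, Set.mem_inter_iff,
        Set.mem_setOf_eq]
      omega
    · rw [Set.disjoint_left]
      intro ω h1 h2
      simp only [Set.mem_preimage, Set.mem_Ici, Set.mem_inter_iff, Set.mem_setOf_eq] at h1 h2
      omega
    · exact (measurableSet_eq_fun hZmeas measurable_const).inter
        (measurableSet_eq_fun hNmeas measurable_const)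
  have hpi0 : ∀ n, 0 ≤ piCoef μM d n := by
    intro n
    unfold piCoef
    split_ifs
    · positivity
    · exact le_rfl
  have hcond : P.real ({ω | Z ω = 1} ∩ {ω | N ω = x - 1}) =
      piCoef μM d (x - 1) * P.real (N ⁻¹' {x - 1}) := by
    rw [measureReal_def, hZcond, ENNReal.toReal_mul, ENNReal.toReal_ofReal (hpi0 _)]
    rfl
  rw [hsplit, hcond, hNset, hNset]
  rcases le_or_gt x d with hx | hx
  · have e0 : piCoef μM d (x - 1) = 0 := by
      unfold piCoef
      rw [if_neg]
      rintro ⟨-, -, h⟩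
      omega
    have e1 : Set.Ici d ∩ Set.Ici x = Set.Ici d := by
      rw [Set.inter_eq_left]; exact Set.Ici_subset_Ici.2 hx
    have e2 : Set.Ici (d + 1) ∩ Set.Ici x = Set.Ici (d + 1) := by
      rw [Set.inter_eq_left]; exact Set.Ici_subset_Ici.2 (by omega)
    rw [e0, e1, e2, inv_mul_cancel₀ hgpos.ne', inv_mul_cancel₀ hg1pos.ne']
    ring
  · have e1 : Set.Ici d ∩ Set.Ici x = Set.Ici x := by
      rw [Set.inter_eq_right]; exact Set.Ici_subset_Ici.2 hx.le
    have e2 : Set.Ici (d + 1) ∩ Set.Ici x = Set.Ici x := by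
      rw [Set.inter_eq_right]; exact Set.Ici_subset_Ici.2 (by omega)
    have e3 : Set.Ici d ∩ {x - 1} = {x - 1} := by
      rw [Set.inter_eq_right]; simp; omega
    have key : piCoef μM d (x - 1) * μM.real {x - 1} =
        μM.real (Set.Ici x) * μM.real {d} / μM.real (Set.Ici (d + 1)) := by
      by_cases h0 : μM {x - 1} = 0
      · have h1 : μM.real {x - 1} = 0 := by simp [measureReal_def, h0]
        rw [h1, mul_zero]
        rcases eq_or_lt_of_le (show d ≤ x - 1 by omega) with h | h
        · rw [h, h1]; simp
        · have hz : μM (Set.Ici x) = 0 := by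
            rw [← Set.biUnion_of_singleton (Set.Ici x),
              measure_biUnion_null_iff (Set.to_countable _)]
            intro y hy
            by_contra hne
            have hy' : x ≤ y := hy
            exact hInt (d + 1) (x - 1) y (by omega) (by omega) hd1 hne h0
          simp [measureReal_def, hz]
      · have h1 : μM.real {x - 1} ≠ 0 :=
          (ENNReal.toReal_pos h0 (measure_ne_top _ _)).ne'
        unfold piCoef
        rw [if_pos ⟨h0, hd1, by omega⟩, sub_add_cancel]
        simp only [← measureReal_def]
        have := hg1pos.ne'
        field_simp
    rw [e1, e2, e3]
    have : piCoef μM d (x - 1) * ((μM.real (Set.Ici d))⁻¹ * μM.real {x - 1}) =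
      (μM.real (Set.Ici d))⁻¹ * (piCoef μM d (x - 1) * μM.real {x - 1}) := by ring
    rw [this, key]
    have h1 := hg1pos.ne'
    have h2 := hgpos.ne'
    field_simp
    rw [hgstep]
    ring
end

section
/- Let M be a lattice log concave integer-valued random variable with support S, and for x, d ∈ ℤ define ρ_x^{(d)} = P(M ≤ x−1)P(M = d) / (P(M ≤ d−1)P(M = x)) if x ∈ S, d−1 ∈ S and x ≤ d, and ρ_x^{(d)} = 0 otherwise. Then: (a) 0 ≤ ρ_x^{(d)} ≤ 1 for all x, d ∈ ℤ; and (b) if d−1 ∈ S and N, Z are random variables on a common probability space such that N has the conditional distribution of M given M ≤ d, and conditionally on N, Z is Bernoulli with success probability ρ_N^{(d)}, then N − Z has the conditional distribution of M given M ≤ d−1. -/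
open MeasureTheory ProbabilityTheory

/-- `ρ_x^{(d)} = P(M ≤ x-1) P(M = d) / (P(M ≤ d-1) P(M = x))` when `x` and `d-1` are in
the support of `μ` and `x ≤ d`, and `0` otherwise. -/
noncomputable def rhoCoef (μ : Measure ℤ) (d x : ℤ) : ℝ :=
  if μ {x} ≠ 0 ∧ μ {d - 1} ≠ 0 ∧ x ≤ d then
    ((μ (Set.Iic (x - 1))).toReal * (μ {d}).toReal) /
      ((μ (Set.Iic (d - 1))).toReal * (μ {x}).toReal)
  else 0

theorem aux_pos {μ : Measure ℤ} [IsProbabilityMeasure μ] {x : ℤ} (h : μ {x} ≠ 0) :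
    0 < μ.real {x} :=
  ENNReal.toReal_pos h (measure_ne_top _ _)

theorem aux_step {μ : Measure ℤ} [IsProbabilityMeasure μ] (hLC : IsLatticeLogConcave μ)
    (y : ℤ) (k : ℕ) :
    μ.real {y} * μ.real {y + k + 1} ≤ μ.real {y + 1} * μ.real {y + k} := by
  induction k with
  | zero => simp [mul_comm]
  | succ k ih =>
    have n0 : ∀ z : ℤ, 0 ≤ μ.real {z} := fun z => measureReal_nonneg
    push_cast
    by_cases h1 : μ {y} = 0
    · have : μ.real {y} = 0 := by simp [measureReal_def, h1]
      rw [this, zero_mul]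
      exact mul_nonneg (n0 _) (n0 _)
    by_cases h2 : μ {y + (k + 1) + 1} = 0
    · have : μ.real {y + ((k : ℤ) + 1) + 1} = 0 := by simp [measureReal_def, h2]
      rw [this, mul_zero]
      exact mul_nonneg (n0 _) (n0 _)
    have h3 : 0 < μ.real {y + k} := aux_pos (hLC.1 y _ _ (by omega) (by omega) h1 h2)
    have h4 := hLC.2 (y + k + 1)
    have e1 : y + (k : ℤ) + 1 - 1 = y + k := by ring
    have e2 : y + ((k : ℤ) + 1) = y + k + 1 := by ring
    rw [e1] at h4
    rw [e2]
    change μ.real _ * μ.real _ ≤ μ.real _ ^ 2 at h4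
    refine le_of_mul_le_mul_left ?_ h3
    nlinarith [mul_le_mul_of_nonneg_left h4 (n0 y),
      mul_le_mul_of_nonneg_right ih (n0 (y + k + 1))]

theorem aux_hasSum (μ : Measure ℤ) [IsProbabilityMeasure μ] (x : ℤ) :
    HasSum (fun k : ℕ => μ.real {x - (k : ℤ)}) (μ.real (Set.Iic x)) := by
  have h : Set.Iic x = ⋃ k : ℕ, {x - (k : ℤ)} := by
    ext z
    simp only [Set.mem_Iic, Set.mem_iUnion, Set.mem_singleton_iff]
    constructor
    · intro hz
      exact ⟨(x - z).toNat, by omega⟩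
    · rintro ⟨k, rfl⟩
      omega
  have h2 : μ (Set.Iic x) = ∑' k : ℕ, μ {x - (k : ℤ)} := by
    rw [h, measure_iUnion]
    · intro i j hij
      simp only [Function.onFun, Set.disjoint_singleton]
      omega
    · intro i
      exact measurableSet_singleton _
  have hne : ∑' k : ℕ, μ {x - (k : ℤ)} ≠ ⊤ := h2 ▸ measure_ne_top _ _
  rw [measureReal_def, h2, ENNReal.tsum_toReal_eq (fun _ => measure_ne_top _ _)]
  exact (ENNReal.summable_toReal hne).hasSum

theorem aux_split (μ : Measure ℤ) [IsProbabilityMeasure μ] (x : ℤ) :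
    μ.real (Set.Iic x) = μ.real (Set.Iic (x - 1)) + μ.real {x} := by
  rw [← measureReal_union (by simp) (measurableSet_singleton _)]
  congr 1
  ext z
  simp only [Set.mem_Iic, Set.mem_union, Set.mem_singleton_iff]
  omega

theorem aux_one {μ : Measure ℤ} [IsProbabilityMeasure μ] (hLC : IsLatticeLogConcave μ)
    (x : ℤ) :
    μ.real (Set.Iic (x - 1)) * μ.real {x + 1} ≤ μ.real (Set.Iic x) * μ.real {x} := by
  refine hasSum_le ?_ ((aux_hasSum μ (x - 1)).mul_right _) ((aux_hasSum μ x).mul_right _)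
  intro k
  have := aux_step hLC (x - 1 - k) (k + 1)
  push_cast at this
  have e1 : x - 1 - (k : ℤ) + (k + 1) = x := by ring
  have e2 : x - 1 - (k : ℤ) + 1 = x - k := by ring
  rwa [e1, e2] at this

theorem aux_gen {μ : Measure ℤ} [IsProbabilityMeasure μ] (hLC : IsLatticeLogConcave μ)
    (x : ℤ) (hx : μ {x} ≠ 0) (k : ℕ) :
    μ.real (Set.Iic (x - 1)) * μ.real {x + k} ≤ μ.real (Set.Iic (x + k - 1)) * μ.real {x} := by
  induction k with
  | zero => simp
  | succ k ih =>
    have n0 : ∀ z : ℤ, 0 ≤ μ.real {z} := fun z => measureReal_nonneg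
    push_cast
    have e1 : x + ((k : ℤ) + 1) = x + k + 1 := by ring
    have e2 : x + (k : ℤ) + 1 - 1 = x + k := by ring
    rw [e1, e2]
    by_cases h2 : μ {x + k + 1} = 0
    · have : μ.real {x + (k : ℤ) + 1} = 0 := by simp [measureReal_def, h2]
      rw [this, mul_zero]
      exact mul_nonneg measureReal_nonneg (n0 _)
    have h3 : 0 < μ.real {x + k} := aux_pos (hLC.1 x _ _ (by omega) (by omega) hx h2)
    have h4 := aux_one hLC (x + k)
    refine le_of_mul_le_mul_left ?_ h3
    nlinarith [mul_le_mul_of_nonneg_left h4 (n0 x),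
      mul_le_mul_of_nonneg_right ih (n0 (x + k + 1))]

theorem aux_Fpos {μ : Measure ℤ} [IsProbabilityMeasure μ] {x : ℤ} (h : μ {x} ≠ 0) :
    0 < μ.real (Set.Iic x) := by
  have := aux_split μ x
  have h1 := aux_pos h
  have h2 : 0 ≤ μ.real (Set.Iic (x - 1)) := measureReal_nonneg
  linarith

theorem aux_rho {μ : Measure ℤ} [IsProbabilityMeasure μ] (hLC : IsLatticeLogConcave μ)
    (x d : ℤ) : 0 ≤ rhoCoef μ d x ∧ rhoCoef μ d x ≤ 1 := by
  unfold rhoCoef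
  split_ifs with h
  · obtain ⟨hx, hd, hxd⟩ := h
    constructor
    · positivity
    · obtain ⟨k, rfl⟩ : ∃ k : ℕ, d = x + k := ⟨(d - x).toNat, by omega⟩
      change μ.real _ * μ.real _ / (μ.real _ * μ.real _) ≤ 1
      rw [div_le_one (mul_pos (aux_Fpos hd) (aux_pos hx))]
      exact aux_gen hLC x hx k
  · exact ⟨le_refl _, zero_le_one⟩

/-- The mass of the success event, cleared of denominators. -/
theorem aux_rho_mul {μ : Measure ℤ} [IsProbabilityMeasure μ] (hLC : IsLatticeLogConcave μ)
    (d : ℤ) (hd : μ {d - 1} ≠ 0) (n : ℤ) (hn : n ≤ d) :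
    rhoCoef μ d n * μ.real {n} = μ.real (Set.Iic (n - 1)) * μ.real {d} / μ.real (Set.Iic (d - 1)) := by
  have hF := aux_Fpos hd
  by_cases h : μ {n} = 0
  · have h0 : μ.real {n} = 0 := by simp [measureReal_def, h]
    rw [h0, mul_zero]
    rcases eq_or_lt_of_le hn with rfl | hlt
    · simp [h0]
    · have : μ.real (Set.Iic (n - 1)) = 0 := by
        refine (aux_hasSum μ (n - 1)).unique ?_
        convert hasSum_zero with k
        by_contra hk
        have hk' : μ {n - 1 - (k : ℤ)} ≠ 0 := by
          intro h'
          exact hk (by simp [measureReal_def, h'])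
        exact hLC.1 _ n _ (by omega) (by omega) hk' hd h
      simp [this]
  · have hp := aux_pos h
    rw [rhoCoef, if_pos ⟨h, hd, hn⟩]
    change μ.real _ * μ.real _ / (μ.real _ * μ.real _) * _ = _
    field_simp

theorem aux_cond (μ : Measure ℤ) [IsProbabilityMeasure μ] (d n : ℤ) :
    (μ[|Set.Iic d]).real {n} = if n ≤ d then μ.real {n} / μ.real (Set.Iic d) else 0 := by
  rw [measureReal_def, cond_apply measurableSet_Iic]
  split_ifs with h
  · have : Set.Iic d ∩ {n} = {n} := by
      ext z; simp only [Set.mem_inter_iff, Set.mem_Iic, Set.mem_singleton_iff]; omega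
    rw [this, ENNReal.toReal_mul, ENNReal.toReal_inv, div_eq_inv_mul]
    rfl
  · have : Set.Iic d ∩ {n} = ∅ := by
      ext z
      simp only [Set.mem_inter_iff, Set.mem_Iic, Set.mem_singleton_iff, Set.mem_empty_iff_false, iff_false]
      omega
    simp [this]

/-- (a) For a lattice log concave `M` the quantity `ρ_x^{(d)}` lies in `[0,1]`; and
(b) if `d-1` lies in the support, `N` has the law of `M` conditioned on `M ≤ d`, and
given `N` the variable `Z` is Bernoulli with success probability `ρ_N^{(d)}`, then
`N - Z` has the law of `M` conditioned on `M ≤ d - 1`. -/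
theorem subtract_one_coupling_of_latticeLogConcave
    (μM : Measure ℤ) [IsProbabilityMeasure μM] (hLC : IsLatticeLogConcave μM) :
    (∀ x d : ℤ, 0 ≤ rhoCoef μM d x ∧ rhoCoef μM d x ≤ 1) ∧
    (∀ d : ℤ, μM {d - 1} ≠ 0 →
      ∀ (Ω : Type) (mΩ : MeasurableSpace Ω) (P : Measure Ω), IsProbabilityMeasure P →
      ∀ N Z : Ω → ℤ, Measurable N → Measurable Z →
        Measure.map N P = μM[|Set.Iic d] →
        (∀ ω, Z ω = 0 ∨ Z ω = 1) →
        (∀ n : ℤ, P ({ω | Z ω = 1} ∩ {ω | N ω = n}) =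
          ENNReal.ofReal (rhoCoef μM d n) * P {ω | N ω = n}) →
        Measure.map (fun ω => N ω - Z ω) P = μM[|Set.Iic (d - 1)]) := by
  refine ⟨aux_rho hLC, ?_⟩
  intro d hd Ω mΩ P hP N Z hN hZ hmap hZ01 hcond
  have hF1 := aux_Fpos hd
  have hsplit := aux_split μM d
  have hpd : 0 ≤ μM.real {d} := measureReal_nonneg
  have hF : 0 < μM.real (Set.Iic d) := by linarith
  have hq : ∀ n : ℤ, P.real {ω | N ω = n} =
      if n ≤ d then μM.real {n} / μM.real (Set.Iic d) else 0 := by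
    intro n
    rw [← aux_cond, ← hmap, map_measureReal_apply hN (measurableSet_singleton _)]
    rfl
  have hr : ∀ n : ℤ, P.real ({ω | Z ω = 1} ∩ {ω | N ω = n}) =
      if n ≤ d then μM.real (Set.Iic (n - 1)) * μM.real {d} / μM.real (Set.Iic (d - 1))
        / μM.real (Set.Iic d) else 0 := by
    intro n
    rw [measureReal_def, hcond, ENNReal.toReal_mul, ENNReal.toReal_ofReal (aux_rho hLC n d).1,
      ← measureReal_def, hq]
    split_ifs with h
    · rw [← aux_rho_mul hLC d hd n h, mul_div_assoc]
    · simp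
  refine Measure.ext_of_singleton fun n => ?_
  have hmZ : MeasurableSet {ω | Z ω = 1} := hZ (measurableSet_singleton 1)
  have hmN : ∀ n, MeasurableSet {ω | N ω = n} := fun n => hN (measurableSet_singleton n)
  have : IsProbabilityMeasure (Measure.map (fun ω => N ω - Z ω) P) :=
    Measure.isProbabilityMeasure_map (hN.sub hZ).aemeasurable
  rw [← ENNReal.toReal_eq_toReal_iff' (measure_ne_top _ _) (measure_ne_top _ _)]
  change Measure.real _ _ = Measure.real _ _
  have hNZ : Measurable (fun ω => N ω - Z ω) := hN.sub hZ
  rw [aux_cond, map_measureReal_apply hNZ (measurableSet_singleton _)]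
  have hset : (fun ω => N ω - Z ω) ⁻¹' {n} =
      ({ω | N ω = n} \ ({ω | Z ω = 1} ∩ {ω | N ω = n})) ∪ ({ω | Z ω = 1} ∩ {ω | N ω = n + 1}) := by
    ext ω
    simp only [Set.mem_preimage, Set.mem_singleton_iff, Set.mem_union, Set.mem_sdiff,
      Set.mem_inter_iff, Set.mem_setOf_eq]
    rcases hZ01 ω with h | h <;> rw [h] <;> omega
  rw [hset, measureReal_union _ (hmZ.inter (hmN _)),
    measureReal_diff Set.inter_subset_right (hmZ.inter (hmN _)), hq, hr, hr]
  · rw [add_sub_cancel_right]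
    rcases lt_trichotomy n d with h | h | h
    · rw [if_pos h.le, if_pos h.le, if_pos (by omega), if_pos (by omega)]
      rw [aux_split μM n]
      field_simp
      rw [hsplit]
      ring
    · subst h
      rw [if_pos le_rfl, if_pos le_rfl, if_neg (by omega), if_neg (by omega)]
      field_simp
      ring
    · rw [if_neg (by omega), if_neg (by omega), if_neg (by omega), if_neg (by omega)]
      simp
  · rw [Set.disjoint_left]
    rintro ω ⟨h1, -⟩ ⟨-, h2⟩
    simp only [Set.mem_setOf_eq] at h1 h2
    omega
end

section
/- Let M be a lattice log concave integer-valued random variable with support S, and fix d ∈ ℤ with P(M = d) < 1. Let Z₊, Z₋ be conditionally independent given M, with conditional distributions Bern(π_M^{(d)}) and Bern(ρ_M^{(d)}) respectively, and let Z be independent of (Z₊, Z₋, M) with distribution Bern(q), where q = P(M ≥ d+1)/P(M ≠ d). Set X = Z·Z₊ − (1 − Z)·Z₋. Then M + X has the conditional distribution of M given M ≠ d. -/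
open MeasureTheory ProbabilityTheory

/-- The Bernoulli mass function: `bern p 1 = p`, `bern p 0 = 1 - p`, else `0`. -/
noncomputable def bern (p : ℝ) (b : ℤ) : ℝ :=
  if b = 1 then p else if b = 0 then 1 - p else 0

/-- Splitting an event along a `{0,1}`-valued variable. -/
lemma real_split01 {Ω : Type*} [MeasurableSpace Ω] (P : Measure Ω) [IsProbabilityMeasure P]
    (f : Ω → ℤ) (hf : Measurable f) (h01 : ∀ ω, f ω = 0 ∨ f ω = 1) (S : Set Ω) :
    P.real S = P.real (S ∩ {ω | f ω = 0}) + P.real (S ∩ {ω | f ω = 1}) := by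
  have hm : MeasurableSet {ω | f ω = 0} := hf (measurableSet_singleton 0)
  rw [← measureReal_inter_add_sdiff (s := S) hm]
  congr 2
  ext ω
  have := h01 ω
  simp only [Set.mem_sdiff, Set.mem_inter_iff, Set.mem_ofPred_eq]
  constructor
  · rintro ⟨h1, h2⟩; exact ⟨h1, by tauto⟩
  · rintro ⟨h1, h2⟩; exact ⟨h1, by omega⟩

/-- If the truncated products add up to one, no truncation took place. -/
lemma max_products {a b : ℝ}
    (h : max ((1 - a) * (1 - b)) 0 + max ((1 - a) * b) 0 + (max (a * (1 - b)) 0 + max (a * b) 0)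
      = 1) :
    max ((1 - a) * (1 - b)) 0 = (1 - a) * (1 - b) ∧ max ((1 - a) * b) 0 = (1 - a) * b ∧
      max (a * (1 - b)) 0 = a * (1 - b) ∧ max (a * b) 0 = a * b := by
  have h1 := le_max_left ((1 - a) * (1 - b)) 0
  have h2 := le_max_left ((1 - a) * b) 0
  have h3 := le_max_left (a * (1 - b)) 0
  have h4 := le_max_left (a * b) 0
  refine ⟨?_, ?_, ?_, ?_⟩ <;> nlinarith

/-- Coupling of a lattice log concave `M` to a variable with the law of `M` conditioned
on `M ≠ d`: with `Z₊, Z₋` conditionally independent given `M`, conditionally Bernoulli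
with success probabilities `π_M^{(d)}` and `ρ_M^{(d)}`, and `Z` an independent
`Bern(q)` coin with `q = P(M ≥ d+1)/P(M ≠ d)`, the variable
`M + Z Z₊ - (1 - Z) Z₋` has the law of `M` conditioned on `M ≠ d`. -/
theorem ne_coupling_of_latticeLogConcave
    {Ω : Type*} [MeasurableSpace Ω] (P : Measure Ω) [IsProbabilityMeasure P]
    (M Zp Zm Z : Ω → ℤ)
    (hMmeas : Measurable M) (hZpmeas : Measurable Zp)
    (hZmmeas : Measurable Zm) (hZmeas : Measurable Z)
    (hLC : IsLatticeLogConcave (Measure.map M P))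
    (d : ℤ) (hd : P {ω | M ω = d} < 1)
    (hZp01 : ∀ ω, Zp ω = 0 ∨ Zp ω = 1) (hZm01 : ∀ ω, Zm ω = 0 ∨ Zm ω = 1)
    (hZ01 : ∀ ω, Z ω = 0 ∨ Z ω = 1)
    -- `Z₊` and `Z₋` are conditionally independent given `M`, with conditional laws
    -- `Bern(π_M^{(d)})` and `Bern(ρ_M^{(d)})` respectively:
    (hcond : ∀ n b₁ b₂ : ℤ,
      P ({ω | Zp ω = b₁} ∩ {ω | Zm ω = b₂} ∩ {ω | M ω = n}) =
        ENNReal.ofReal (bern (piCoef (Measure.map M P) d n) b₁ *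
          bern (rhoCoef (Measure.map M P) d n) b₂) * P {ω | M ω = n})
    -- `Z` is independent of `(Z₊, Z₋, M)` with law `Bern(q)`:
    (hq : P {ω | Z ω = 1} =
      P {ω | d + 1 ≤ M ω} / P {ω | M ω ≠ d})
    (hindep : ∀ (a n b₁ b₂ : ℤ),
      P ({ω | Z ω = a} ∩ ({ω | Zp ω = b₁} ∩ {ω | Zm ω = b₂} ∩ {ω | M ω = n})) =
        P {ω | Z ω = a} * P ({ω | Zp ω = b₁} ∩ {ω | Zm ω = b₂} ∩ {ω | M ω = n})) :
    Measure.map (fun ω => M ω + (Z ω * Zp ω - (1 - Z ω) * Zm ω)) P =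
      (Measure.map M P)[|{d}ᶜ] := by
  have hmM : ∀ s : Set ℤ, (Measure.map M P) s = P (M ⁻¹' s) := fun s =>
    Measure.map_apply hMmeas (MeasurableSet.of_discrete)
  set p : ℤ → ℝ := fun n => P.real {ω | M ω = n} with hp
  set G : ℤ → ℝ := fun n => P.real {ω | n + 1 ≤ M ω} with hG
  set H : ℤ → ℝ := fun n => P.real {ω | M ω ≤ n - 1} with hH
  set R : ℝ := P.real {ω | M ω ≠ d} with hR
  have hp0 : ∀ n, 0 ≤ p n := fun n => measureReal_nonneg
  have hmeasM : ∀ s : Set ℤ, MeasurableSet (M ⁻¹' s) := fun s => hMmeas MeasurableSet.of_discrete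
  have hRp : R + p d = 1 := by
    have := probReal_compl_eq_one_sub (μ := P) (hmeasM {d})
    have e : R = P.real (M ⁻¹' {d})ᶜ := rfl
    have e2 : p d = P.real (M ⁻¹' {d}) := rfl
    rw [e, e2, this]; ring
  have hRpos : 0 < R := by
    have : p d < 1 := by
      have := (ENNReal.toReal_lt_toReal (measure_ne_top P _) ENNReal.one_ne_top).2 hd
      simpa [hp, Measure.real] using this
    linarith
  have hGH : G d + H d = R := by
    have := measureReal_union (μ := P) (s₁ := {ω | d + 1 ≤ M ω}) (s₂ := {ω | M ω ≤ d - 1})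
      (by
        rw [Set.disjoint_left]; intro ω h1 h2
        simp only [Set.mem_ofPred_eq] at h1 h2; omega) (hmeasM (Set.Iic (d - 1)))
    simp only [hG, hH, hR]
    rw [← this]
    congr 1; ext ω; simp only [Set.mem_union, Set.mem_ofPred_eq]; omega
  have hGs : ∀ n, G (n - 1) = p n + G n := by
    intro n
    have := measureReal_union (μ := P) (s₁ := {ω | M ω = n}) (s₂ := {ω | n + 1 ≤ M ω})
      (by
        rw [Set.disjoint_left]; intro ω h1 h2
        simp only [Set.mem_ofPred_eq] at h1 h2; omega) (hmeasM (Set.Ici (n + 1)))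
    simp only [hG, hp]
    rw [← this]
    congr 1; ext ω; simp only [Set.mem_union, Set.mem_ofPred_eq]; omega
  have hHs : ∀ n, H (n + 1) = p n + H n := by
    intro n
    have := measureReal_union (μ := P) (s₁ := {ω | M ω = n}) (s₂ := {ω | M ω ≤ n - 1})
      (by
        rw [Set.disjoint_left]; intro ω h1 h2
        simp only [Set.mem_ofPred_eq] at h1 h2; omega) (hmeasM (Set.Iic (n - 1)))
    simp only [hH, hp]
    rw [← this]
    congr 1; ext ω; simp only [Set.mem_union, Set.mem_ofPred_eq]; omega
  have hpm : ∀ n, (Measure.map M P {n}) ≠ 0 ↔ p n ≠ 0 := by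
    intro n
    rw [hmM]
    exact (measureReal_ne_zero_iff (μ := P) (s := M ⁻¹' {n})).symm
  have hint : ∀ x y z : ℤ, x ≤ y → y ≤ z → p x ≠ 0 → p z ≠ 0 → p y ≠ 0 := by
    intro x y z h1 h2 h3 h4
    exact (hpm y).1 (hLC.1 x y z h1 h2 ((hpm x).2 h3) ((hpm z).2 h4))
  -- an event described by `M` is null when all its atoms are
  have hnull : ∀ s : Set ℤ, (∀ n ∈ s, p n = 0) → P.real (M ⁻¹' s) = 0 := by
    intro s hs
    have h1 : P (M ⁻¹' s) = 0 := by
      have : M ⁻¹' s = ⋃ n ∈ s, M ⁻¹' {n} := by ext ω; simp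
      rw [this]
      refine (measure_biUnion_null_iff (Set.to_countable s)).2 fun n hn => ?_
      exact (measureReal_eq_zero_iff (μ := P)).1 (hs n hn)
    simp [Measure.real, h1]
  have hGnull : ∀ x, d ≤ x → p d ≠ 0 → p x = 0 → G x = 0 := by
    intro x hx h1 h2
    refine hnull (Set.Ici (x + 1)) fun n hn => ?_
    by_contra h3
    exact hint d x n hx (by simp only [Set.mem_Ici] at hn; omega) h1 h3 h2
  have hHnull : ∀ x, x ≤ d → p d ≠ 0 → p x = 0 → H x = 0 := by
    intro x hx h1 h2
    refine hnull (Set.Iic (x - 1)) fun n hn => ?_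
    by_contra h3
    exact hint n x d (by simp only [Set.mem_Iic] at hn; omega) hx h3 h1 h2
  have hGp : ∀ n, p (n + 1) ≤ G n := by
    intro n
    exact measureReal_mono (by intro ω h; simp only [Set.mem_ofPred_eq] at *; omega)
  have hHp : ∀ n, p (n - 1) ≤ H n := by
    intro n
    exact measureReal_mono (by intro ω h; simp only [Set.mem_ofPred_eq] at *; omega)
  have hGmono : ∀ x, d ≤ x → G x ≤ G d := by
    intro x hx
    exact measureReal_mono (by intro ω h; simp only [Set.mem_ofPred_eq] at *; omega)
  have hHmono : ∀ x, x ≤ d → H x ≤ H d := by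
    intro x hx
    exact measureReal_mono (by intro ω h; simp only [Set.mem_ofPred_eq] at *; omega)
  have hG0 : ∀ n, 0 ≤ G n := fun n => measureReal_nonneg
  have hH0 : ∀ n, 0 ≤ H n := fun n => measureReal_nonneg
  set a : ℤ → ℝ := fun n => piCoef (Measure.map M P) d n with ha
  set b : ℤ → ℝ := fun n => rhoCoef (Measure.map M P) d n with hb
  have ha_def : ∀ n, a n = if p n ≠ 0 ∧ p (d + 1) ≠ 0 ∧ d ≤ n then
      (G n * p d) / (G d * p n) else 0 := by
    intro n
    simp only [ha, piCoef, hpm]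
    simp only [hmM]
    rfl
  have hb_def : ∀ n, b n = if p n ≠ 0 ∧ p (d - 1) ≠ 0 ∧ n ≤ d then
      (H n * p d) / (H d * p n) else 0 := by
    intro n
    simp only [hb, rhoCoef, hpm]
    simp only [hmM]
    rfl
  have ha1 : ∀ n, d ≤ n → G d * (a n * p n) = G n * p d := by
    intro n hn
    rw [ha_def]
    by_cases h0 : p d = 0
    · simp [h0]
    by_cases h1 : p (d + 1) = 0
    · have e : G d = 0 := by
        have := hGs (d + 1)
        rw [hGnull (d + 1) (by omega) h0 h1, h1] at this
        simpa using this
      have e2 : G n = 0 := le_antisymm (e ▸ hGmono n hn) (hG0 n)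
      simp [e, e2]
    by_cases h2 : p n = 0
    · simp [h2, hGnull n hn h0 h2]
    have h3 : G d ≠ 0 := by
      have := hGp d
      have := lt_of_le_of_ne (hp0 (d + 1)) (Ne.symm h1)
      linarith
    rw [if_pos ⟨h2, h1, hn⟩]
    field_simp
  have hb1 : ∀ n, n ≤ d → H d * (b n * p n) = H n * p d := by
    intro n hn
    rw [hb_def]
    by_cases h0 : p d = 0
    · simp [h0]
    by_cases h1 : p (d - 1) = 0
    · have e : H d = 0 := by
        have := hHs (d - 1)
        rw [hHnull (d - 1) (by omega) h0 h1, h1] at this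
        simpa using this
      have e2 : H n = 0 := le_antisymm (e ▸ hHmono n hn) (hH0 n)
      simp [e, e2]
    by_cases h2 : p n = 0
    · simp [h2, hHnull n hn h0 h2]
    have h3 : H d ≠ 0 := by
      have := hHp d
      have := lt_of_le_of_ne (hp0 (d - 1)) (Ne.symm h1)
      linarith
    rw [if_pos ⟨h2, h1, hn⟩]
    field_simp
  have ha2 : ∀ n, n < d → a n = 0 := by
    intro n hn
    rw [ha_def, if_neg]
    rintro ⟨-, -, h⟩; omega
  have hb2 : ∀ n, d < n → b n = 0 := by
    intro n hn
    rw [hb_def, if_neg]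
    rintro ⟨-, -, h⟩; omega
  -- the joint masses
  set V : ℤ → ℤ → ℤ → ℝ := fun b₁ b₂ n =>
    P.real ({ω | Zp ω = b₁} ∩ {ω | Zm ω = b₂} ∩ {ω | M ω = n}) with hV
  have hVdef : ∀ b₁ b₂ n, V b₁ b₂ n = max (bern (a n) b₁ * bern (b n) b₂) 0 * p n := by
    intro b₁ b₂ n
    simp only [hV, Measure.real]
    rw [hcond, ENNReal.toReal_mul, ENNReal.toReal_ofReal']
    rfl
  have hVsum : ∀ n, V 0 0 n + V 0 1 n + (V 1 0 n + V 1 1 n) = p n := by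
    intro n
    simp only [hV, hp]
    rw [real_split01 P Zp hZpmeas hZp01 {ω | M ω = n},
      real_split01 P Zm hZmmeas hZm01 ({ω | M ω = n} ∩ {ω | Zp ω = 0}),
      real_split01 P Zm hZmmeas hZm01 ({ω | M ω = n} ∩ {ω | Zp ω = 1})]
    congr 3 <;> (ext ω; simp only [Set.mem_inter_iff, Set.mem_ofPred_eq]; tauto)
  have hVval : ∀ n, V 0 0 n = (1 - a n) * (1 - b n) * p n ∧ V 0 1 n = (1 - a n) * b n * p n ∧
      V 1 0 n = a n * (1 - b n) * p n ∧ V 1 1 n = a n * b n * p n := by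
    intro n
    have hs := hVsum n
    simp only [hVdef] at hs ⊢
    simp only [bern] at hs ⊢
    norm_num at hs ⊢
    by_cases h0 : p n = 0
    · simp [h0]
    have := max_products (a := a n) (b := b n) (by
      apply mul_right_cancel₀ h0
      linarith)
    obtain ⟨h1, h2, h3, h4⟩ := this
    exact ⟨Or.inl (by simpa using h1), Or.inl (by simpa using h2), Or.inl (by simpa using h3),
      Or.inl (by simpa using h4)⟩
  set q : ℝ := P.real {ω | Z ω = 1} with hqdef
  have hqR : q = G d / R := by
    simp only [hqdef, Measure.real, hq, ENNReal.toReal_div]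
    rfl
  have hq' : P.real {ω | Z ω = 0} = H d / R := by
    have h := real_split01 P Z hZmeas hZ01 Set.univ
    simp only [Set.univ_inter, probReal_univ] at h
    have : P.real {ω | Z ω = 0} = 1 - q := by linarith
    rw [this, hqR, ← hGH]
    have : G d + H d ≠ 0 := by rw [hGH]; exact hRpos.ne'
    field_simp
    ring
  have hW : ∀ z b₁ b₂ n,
      P.real ({ω | Z ω = z} ∩ ({ω | Zp ω = b₁} ∩ {ω | Zm ω = b₂} ∩ {ω | M ω = n})) =
      P.real {ω | Z ω = z} * V b₁ b₂ n := by
    intro z b₁ b₂ n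
    simp only [hV, Measure.real]
    rw [hindep, ENNReal.toReal_mul]
  have hYmeas : Measurable (fun ω => M ω + (Z ω * Zp ω - (1 - Z ω) * Zm ω)) := by fun_prop
  have : IsProbabilityMeasure (Measure.map (fun ω => M ω + (Z ω * Zp ω - (1 - Z ω) * Zm ω)) P) :=
    Measure.isProbabilityMeasure_map hYmeas.aemeasurable
  have hY : ∀ x, P.real {ω | M ω + (Z ω * Zp ω - (1 - Z ω) * Zm ω) = x} =
      H d / R * (V 0 0 x + V 0 1 (x + 1) + (V 1 0 x + V 1 1 (x + 1))) +
      q * (V 0 0 x + V 0 1 x + (V 1 0 (x - 1) + V 1 1 (x - 1))) := by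
    intro x
    set S : Set Ω := {ω | M ω + (Z ω * Zp ω - (1 - Z ω) * Zm ω) = x} with hS
    have key : ∀ z b₁ b₂ n : ℤ, n = x - (z * b₁ - (1 - z) * b₂) →
        P.real (S ∩ {ω | Z ω = z} ∩ {ω | Zp ω = b₁} ∩ {ω | Zm ω = b₂}) =
        P.real {ω | Z ω = z} * V b₁ b₂ n := by
      intro z b₁ b₂ n hn
      rw [← hW]
      congr 1
      ext ω
      simp only [hS, Set.mem_inter_iff, Set.mem_ofPred_eq]
      constructor
      · rintro ⟨⟨⟨h, rfl⟩, rfl⟩, rfl⟩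
        exact ⟨rfl, ⟨rfl, rfl⟩, by linarith⟩
      · rintro ⟨rfl, ⟨rfl, rfl⟩, h⟩
        exact ⟨⟨⟨by linarith, rfl⟩, rfl⟩, rfl⟩
    rw [real_split01 P Z hZmeas hZ01 S,
      real_split01 P Zp hZpmeas hZp01 (S ∩ {ω | Z ω = 0}),
      real_split01 P Zp hZpmeas hZp01 (S ∩ {ω | Z ω = 1}),
      real_split01 P Zm hZmmeas hZm01 (S ∩ {ω | Z ω = 0} ∩ {ω | Zp ω = 0}),
      real_split01 P Zm hZmmeas hZm01 (S ∩ {ω | Z ω = 0} ∩ {ω | Zp ω = 1}),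
      real_split01 P Zm hZmmeas hZm01 (S ∩ {ω | Z ω = 1} ∩ {ω | Zp ω = 0}),
      real_split01 P Zm hZmmeas hZm01 (S ∩ {ω | Z ω = 1} ∩ {ω | Zp ω = 1}),
      key 0 0 0 x (by ring), key 0 0 1 (x + 1) (by ring), key 0 1 0 x (by ring),
      key 0 1 1 (x + 1) (by ring), key 1 0 0 x (by ring), key 1 0 1 x (by ring),
      key 1 1 0 (x - 1) (by ring), key 1 1 1 (x - 1) (by ring), hq']
    ring
  have hfin : ∀ x, P.real {ω | M ω + (Z ω * Zp ω - (1 - Z ω) * Zm ω) = x} * R =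
      if x = d then 0 else p x := by
    intro x
    obtain ⟨e1, e2, e3, e4⟩ := hVval x
    obtain ⟨-, f2, -, f4⟩ := hVval (x + 1)
    obtain ⟨-, -, g3, g4⟩ := hVval (x - 1)
    rw [hY, hqR, e1, e2, e3, f2, f4, g3, g4]
    have step : (H d / R * ((1 - a x) * (1 - b x) * p x + (1 - a (x + 1)) * b (x + 1) * p (x + 1) +
        (a x * (1 - b x) * p x + a (x + 1) * b (x + 1) * p (x + 1))) +
      G d / R * ((1 - a x) * (1 - b x) * p x + (1 - a x) * b x * p x +
        (a (x - 1) * (1 - b (x - 1)) * p (x - 1) +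
          a (x - 1) * b (x - 1) * p (x - 1)))) * R =
      (G d + H d) * p x - H d * (b x * p x) + H d * (b (x + 1) * p (x + 1))
        - G d * (a x * p x) + G d * (a (x - 1) * p (x - 1)) := by
      field_simp
      ring
    rw [step, hGH]
    rcases lt_trichotomy x d with h | h | h
    · rw [if_neg h.ne, ha2 x h, ha2 (x - 1) (by omega), hb1 x h.le, hb1 (x + 1) (by omega), hHs x]
      linear_combination p x * hRp
    · subst h
      rw [if_pos rfl, ha2 (x - 1) (by omega), hb2 (x + 1) (by omega), ha1 x le_rfl, hb1 x le_rfl]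
      linear_combination - p x * hGH
    · rw [if_neg h.ne', hb2 x h, hb2 (x + 1) (by omega), ha1 x h.le, ha1 (x - 1) (by omega), hGs x]
      linear_combination p x * hRp
  refine Measure.ext_of_singleton fun x => ?_
  rw [← ENNReal.toReal_eq_toReal_iff' (measure_ne_top _ _) (measure_ne_top _ _),
    Measure.map_apply hYmeas (measurableSet_singleton x),
    cond_apply (MeasurableSet.of_discrete), ENNReal.toReal_mul, ENNReal.toReal_inv, hmM, hmM]
  have hx := hfin x
  have e1 : (P (M ⁻¹' {d}ᶜ)).toReal = R := rfl
  rw [e1]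
  have e2 : (P (M ⁻¹' ({d}ᶜ ∩ {x}))).toReal = if x = d then 0 else p x := by
    split_ifs with h
    · subst h; simp
    · have : ({d}ᶜ ∩ {x} : Set ℤ) = {x} := by
        ext y; simp only [Set.mem_inter_iff, Set.mem_compl_iff, Set.mem_singleton_iff]
        constructor
        · exact fun h => h.2
        · rintro rfl; exact ⟨h, rfl⟩
      rw [this]; rfl
  rw [e2, ← hx]
  have e3 : (P ((fun ω => M ω + (Z ω * Zp ω - (1 - Z ω) * Zm ω)) ⁻¹' {x})).toReal =
    P.real {ω | M ω + (Z ω * Zp ω - (1 - Z ω) * Zm ω) = x} := rfl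
  rw [e3]
  field_simp
end

section
/- Let M be a lattice log concave integer-valued random variable whose support S satisfies a := inf S > −∞, and let d ∈ S. Then there exists an integer-valued random variable A defined on the same probability space as M with 0 ≤ A ≤ d − a almost surely such that M + A has the conditional distribution of M given M ≥ d. -/
open MeasureTheory ProbabilityTheory

lemma aux_step_s11 (p : ℤ → ℝ) (hp : ∀ x, 0 ≤ p x)
    (hs : ∀ x y z : ℤ, x ≤ y → y ≤ z → p x ≠ 0 → p z ≠ 0 → p y ≠ 0)
    (hl : ∀ x, p (x - 1) * p (x + 1) ≤ p x ^ 2) (i : ℤ) (n : ℕ) :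
    p i * p (i + n + 1) ≤ p (i + 1) * p (i + n) := by
  induction n with
  | zero => simp [mul_comm]
  | succ n ih =>
    by_cases h : p i = 0
    · rw [h, zero_mul]; exact mul_nonneg (hp _) (hp _)
    by_cases h2 : p (i + (n + 1 : ℕ) + 1) = 0
    · rw [h2, mul_zero]; exact mul_nonneg (hp _) (hp _)
    have h3 : 0 < p (i + n) := lt_of_le_of_ne (hp _)
      (Ne.symm (hs i (i + n) _ (by omega) (by push_cast; omega) h h2))
    have h4 := hl (i + n + 1)
    rw [show i + n + 1 - 1 = i + (n : ℤ) by ring] at h4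
    push_cast at *
    rw [← add_assoc] at *
    have h5 := mul_le_mul_of_nonneg_left h4 (hp i)
    have h6 := mul_le_mul_of_nonneg_right ih (hp (i + n + 1))
    refine le_of_mul_le_mul_right ?_ h3
    nlinarith

lemma aux_pf (p : ℤ → ℝ) (hp : ∀ x, 0 ≤ p x)
    (hs : ∀ x y z : ℤ, x ≤ y → y ≤ z → p x ≠ 0 → p z ≠ 0 → p y ≠ 0)
    (hl : ∀ x, p (x - 1) * p (x + 1) ≤ p x ^ 2) (i j : ℤ) (hij : i ≤ j) (k : ℕ) :
    p i * p (j + k) ≤ p (i + k) * p j := by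
  induction k with
  | zero => simp
  | succ k ih =>
    by_cases h : p i = 0
    · rw [h, zero_mul]; exact mul_nonneg (hp _) (hp _)
    by_cases h2 : p (j + (k + 1 : ℕ)) = 0
    · rw [h2, mul_zero]; exact mul_nonneg (hp _) (hp _)
    have h3 : 0 < p (i + k) := lt_of_le_of_ne (hp _)
      (Ne.symm (hs i (i + k) _ (by omega) (by push_cast; omega) h h2))
    have h4 : 0 < p (j + k) := lt_of_le_of_ne (hp _)
      (Ne.symm (hs i (j + k) _ (by omega) (by push_cast; omega) h h2))
    obtain ⟨n, hn⟩ := Int.eq_ofNat_of_zero_le (show 0 ≤ j - i by omega)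
    have h5 := aux_step_s11 p hp hs hl (i + k) n
    rw [show i + k + (n : ℤ) = j + k by omega] at h5
    push_cast at *
    rw [← add_assoc, ← add_assoc] at *
    refine le_of_mul_le_mul_right ?_ (mul_pos h3 h4)
    have h6 := mul_le_mul ih h5 (mul_nonneg (hp _) (hp _)) (mul_nonneg (hp _) (hp _))
    nlinarith

lemma aux_quantile (μ : Measure ℤ) [IsProbabilityMeasure μ] :
    ∃ Q : ℝ → ℤ, Measurable Q ∧
      (∀ u ∈ Set.Ioo (0 : ℝ) 1, ∀ x, Q u ≤ x ↔ u ≤ μ.real (Set.Iic x)) ∧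
      Measure.map Q (volume.restrict (Set.Ioo (0 : ℝ) 1)) = μ := by
  classical
  have hmono : Monotone fun x : ℤ => μ.real (Set.Iic x) := fun x y h =>
    measureReal_mono (Set.Iic_subset_Iic.2 h)
  have hex : ∀ u ∈ Set.Ioo (0 : ℝ) 1, ∃ q : ℤ, ∀ x, q ≤ x ↔ u ≤ μ.real (Set.Iic x) := by
    intro u hu
    have htop : Filter.Tendsto (fun x : ℤ => μ.real (Set.Iic x)) Filter.atTop (nhds 1) := by
      have := tendsto_measure_Iic_atTop μ
      rw [measure_univ] at this
      exact (ENNReal.tendsto_toReal (by simp)).comp this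
    have hbot : Filter.Tendsto (fun x : ℤ => μ.real (Set.Iic x)) Filter.atBot (nhds 0) := by
      have := tendsto_measure_iInter_atBot (μ := μ) (s := fun x : ℤ => Set.Iic x)
        (fun i => measurableSet_Iic.nullMeasurableSet) (fun x y h => Set.Iic_subset_Iic.2 h)
        ⟨0, measure_ne_top _ _⟩
      have he : ⋂ x : ℤ, Set.Iic x = ∅ := by
        ext y; simp only [Set.mem_iInter, Set.mem_Iic, Set.mem_empty_iff_false, iff_false, not_forall]
        exact ⟨y - 1, by omega⟩
      rw [he, measure_empty] at this
      exact (ENNReal.tendsto_toReal (by simp)).comp this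
    obtain ⟨t, ht⟩ := (htop.eventually (lt_mem_nhds hu.2)).exists
    obtain ⟨b, hb⟩ := (hbot.eventually (gt_mem_nhds hu.1)).exists
    obtain ⟨q, hq, hq2⟩ := Int.exists_least_of_bdd (P := fun x => u ≤ μ.real (Set.Iic x))
      ⟨b, fun z hz => by
        by_contra hlt
        have := hmono (le_of_not_ge hlt)
        simp only at this
        linarith⟩ ⟨t, ht.le⟩
    exact ⟨q, fun x => ⟨fun h => hq.trans (hmono h), hq2 x⟩⟩
  choose! Q hQ using hex
  let Q' : ℝ → ℤ := fun u => if u ∈ Set.Ioo (0 : ℝ) 1 then Q u else 0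
  have hQ' : ∀ u ∈ Set.Ioo (0 : ℝ) 1, ∀ x, Q' u ≤ x ↔ u ≤ μ.real (Set.Iic x) := by
    intro u hu x
    simp only [Q', if_pos hu]
    exact hQ u hu x
  have hm : Measurable Q' := by
    refine measurable_of_Iic fun x => ?_
    have : Q' ⁻¹' Set.Iic x = (Set.Ioo (0 : ℝ) 1 ∩ Set.Iic (μ.real (Set.Iic x))) ∪
        ((Set.Ioo (0 : ℝ) 1)ᶜ ∩ {_u : ℝ | 0 ≤ x}) := by
      ext u
      by_cases hu : u ∈ Set.Ioo (0 : ℝ) 1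
      · have := hQ' u hu x
        simp only [Set.mem_preimage, Set.mem_union, Set.mem_inter_iff, Set.mem_compl_iff, hu,
          Set.mem_Iic, this]
        simp
      · simp only [Set.mem_preimage, Set.mem_union, Set.mem_inter_iff, Set.mem_compl_iff, hu,
          Set.mem_Iic, Q']
        simp
    rw [this]
    exact (measurableSet_Ioo.inter measurableSet_Iic).union
      (measurableSet_Ioo.compl.inter (MeasurableSet.const _))
  refine ⟨Q', hm, hQ', ?_⟩
  have : IsProbabilityMeasure (volume.restrict (Set.Ioo (0 : ℝ) 1)) := ⟨by simp⟩
  have := Measure.isProbabilityMeasure_map (μ := volume.restrict (Set.Ioo (0 : ℝ) 1)) hm.aemeasurable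
  refine Measure.ext_of_Iic _ _ fun x => ?_
  rw [Measure.map_apply hm measurableSet_Iic,
    Measure.restrict_apply (hm measurableSet_Iic)]
  have : Q' ⁻¹' Set.Iic x ∩ Set.Ioo (0 : ℝ) 1 = Set.Ioo (0 : ℝ) 1 ∩ Set.Iic (μ.real (Set.Iic x)) := by
    ext u
    by_cases hu : u ∈ Set.Ioo (0 : ℝ) 1
    · have := hQ' u hu x
      simp only [Set.mem_preimage, Set.mem_inter_iff, hu, Set.mem_Iic, this]
      simp
    · simp only [Set.mem_inter_iff, hu, and_false, false_and]
  rw [this]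
  have h1 : μ.real (Set.Iic x) ≤ 1 := measureReal_le_one
  have : volume (Set.Ioo (0 : ℝ) 1 ∩ Set.Iic (μ.real (Set.Iic x))) =
      volume (Set.Ioc (0 : ℝ) (μ.real (Set.Iic x))) := by
    refine measure_congr ?_
    have hne : ∀ᵐ u : ℝ, u ≠ 1 := Measure.ae_ne volume 1
    filter_upwards [hne] with u hu
    refine propext ?_
    change (u ∈ Set.Ioo (0 : ℝ) 1 ∩ Set.Iic (μ.real (Set.Iic x))) ↔ u ∈ Set.Ioc (0 : ℝ) (μ.real (Set.Iic x))
    simp only [Set.mem_inter_iff, Set.mem_Ioo, Set.mem_Iic, Set.mem_Ioc]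
    constructor
    · rintro ⟨⟨h, _⟩, h'⟩; exact ⟨h, h'⟩
    · rintro ⟨h, h'⟩; exact ⟨⟨h, lt_of_le_of_ne (h'.trans h1) hu⟩, h'⟩
  rw [this, Real.volume_Ioc, sub_zero]
  simp [Measure.real]

lemma aux_tail (μ : Measure ℤ) [IsProbabilityMeasure μ] (hLC : IsLatticeLogConcave μ)
    (i x : ℤ) (hi : i ≤ x) (k : ℕ) :
    μ {i} * μ (Set.Ioi (x + k)) ≤ μ {i + (k : ℤ)} * μ (Set.Ioi x) := by
  have key : ∀ j, i ≤ j → μ {i} * μ {j + (k : ℤ)} ≤ μ {i + (k : ℤ)} * μ {j} := by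
    intro j hj
    have := aux_pf (fun x => (μ {x}).toReal) (fun _ => ENNReal.toReal_nonneg)
      (fun x y z h1 h2 h3 h4 => by
        have h3' : μ {x} ≠ 0 := fun h => h3 (by simp [h])
        have h4' : μ {z} ≠ 0 := fun h => h4 (by simp [h])
        exact ENNReal.toReal_ne_zero.2 ⟨hLC.1 x y z h1 h2 h3' h4', measure_ne_top _ _⟩)
      hLC.2 i j hj k
    simp only [← ENNReal.toReal_mul] at this
    exact (ENNReal.toReal_le_toReal (ENNReal.mul_ne_top (measure_ne_top _ _) (measure_ne_top _ _))
      (ENNReal.mul_ne_top (measure_ne_top _ _) (measure_ne_top _ _))).1 this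
  rw [← Measure.tsum_indicator_apply_singleton μ (Set.Ioi (x + k)) measurableSet_Ioi,
    ← Measure.tsum_indicator_apply_singleton μ (Set.Ioi x) measurableSet_Ioi,
    ← (Equiv.addRight (k : ℤ)).tsum_eq, ← ENNReal.tsum_mul_left, ← ENNReal.tsum_mul_left]
  refine ENNReal.tsum_le_tsum fun j => ?_
  by_cases hj : x < j
  · rw [Set.indicator_of_mem (by simpa using hj), Set.indicator_of_mem (by simpa using hj)]
    exact key j (by omega)
  · rw [Set.indicator_of_notMem (by simpa using hj)]
    simp

lemma aux_cdf (μ : Measure ℤ) [IsProbabilityMeasure μ] (hLC : IsLatticeLogConcave μ)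
    (a : ℤ) (ha : ∀ x < a, μ {x} = 0) (k : ℕ) (x : ℤ) :
    μ (Set.Iic x) * μ (Set.Ici (a + k)) ≤ μ (Set.Icc (a + k) (x + k)) := by
  have h0 : μ (Set.Iio a) = 0 := by
    rw [← Set.biUnion_of_singleton (Set.Iio a), measure_biUnion_null_iff (Set.to_countable _)]
    exact ha
  by_cases hx : x < a
  · have hn : μ (Set.Iic x) = 0 := measure_mono_null (Set.Iic_subset_Iio.2 hx) h0
    rw [hn]; simp
  push Not at hx
  have h1 : μ (Set.Iic x) = μ (Set.Icc a x) := by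
    refine le_antisymm ?_ (measure_mono fun y hy => hy.2)
    calc μ (Set.Iic x) ≤ μ (Set.Iio a ∪ Set.Icc a x) := measure_mono (fun y (hy : y ≤ x) => by
          simp only [Set.mem_union, Set.mem_Iio, Set.mem_Icc]; omega)
      _ ≤ _ := measure_union_le _ _
      _ = _ := by rw [h0, zero_add]
  have h2 : μ (Set.Ici (a + k)) = μ (Set.Icc (a + k) (x + k)) + μ (Set.Ioi (x + k)) := by
    rw [← measure_union _ measurableSet_Ioi]
    · congr 1; ext y; simp only [Set.mem_union, Set.mem_Ici, Set.mem_Icc, Set.mem_Ioi]; omega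
    · rw [Set.disjoint_left]; intro y hy hy2
      simp only [Set.mem_Icc, Set.mem_Ioi] at *; omega
  have h3 : μ (Set.Iic x) + μ (Set.Ioi x) = 1 := by
    rw [← Set.compl_Iic, measure_add_measure_compl measurableSet_Iic, measure_univ]
  have h4 : μ (Set.Icc a x) * μ (Set.Ioi (x + k)) ≤ μ (Set.Icc (a + k) (x + k)) * μ (Set.Ioi x) := by
    rw [← Finset.coe_Icc, ← Finset.coe_Icc, ← sum_measure_singleton, ← sum_measure_singleton,
      Finset.sum_mul, Finset.sum_mul, ← Finset.map_add_right_Icc, Finset.sum_map]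
    refine Finset.sum_le_sum fun i hi => ?_
    exact aux_tail μ hLC i x (Finset.mem_Icc.1 hi).2 k
  calc _ = μ (Set.Icc (a + k) (x + k)) * μ (Set.Iic x) + μ (Set.Icc a x) * μ (Set.Ioi (x + k)) := by
        rw [h2, mul_add, mul_comm, ← h1]
    _ ≤ μ (Set.Icc (a + k) (x + k)) * μ (Set.Iic x) + μ (Set.Icc (a + k) (x + k)) * μ (Set.Ioi x) := by
        gcongr
    _ = _ := by rw [← mul_add, h3, mul_one]

/-- For a lattice log concave `M` whose support has a finite infimum `a`, and any `d`
in the support, there is a coupling (a joint law `ν` of `(M, A)`) of `M` with an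
integer-valued `A` satisfying `0 ≤ A ≤ d - a` a.s. and such that `M + A` has the
law of `M` conditioned on `M ≥ d`. -/
theorem exists_bounded_coupling_ge_of_latticeLogConcave
    (μ : Measure ℤ) [IsProbabilityMeasure μ] (hLC : IsLatticeLogConcave μ)
    (a : ℤ) (ha : IsLeast {x : ℤ | μ {x} ≠ 0} a)
    (d : ℤ) (hd : μ {d} ≠ 0) :
    ∃ ν : Measure (ℤ × ℤ), IsProbabilityMeasure ν ∧
      Measure.map Prod.fst ν = μ ∧
      (∀ᵐ q ∂ν, 0 ≤ q.2 ∧ q.2 ≤ d - a) ∧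
      Measure.map (fun q : ℤ × ℤ => q.1 + q.2) ν = μ[|Set.Ici d] := by
  have had : a ≤ d := ha.2 hd
  obtain ⟨k, hk⟩ := Int.eq_ofNat_of_zero_le (show 0 ≤ d - a by omega)
  obtain rfl : d = a + k := by omega
  have hG : μ (Set.Ici (a + (k : ℤ))) ≠ 0 := fun h =>
    hd (measure_mono_null (by simp) h)
  have hGt : μ (Set.Ici (a + (k : ℤ))) ≠ ⊤ := measure_ne_top _ _
  have := cond_isProbabilityMeasure hG
  obtain ⟨Q, hQm, hQ, hQl⟩ := aux_quantile μ
  obtain ⟨R, hRm, hR, hRl⟩ := aux_quantile (μ[|Set.Ici (a + (k : ℤ))])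
  have hz : ∀ x < a, μ {x} = 0 := fun x hx => by
    by_contra h
    exact absurd (ha.2 h) (by omega)
  have c1 : ∀ x, (μ[|Set.Ici (a + (k : ℤ))]).real (Set.Iic x) ≤ μ.real (Set.Iic x) := by
    intro x
    refine ENNReal.toReal_mono (measure_ne_top _ _) ?_
    rw [cond_apply measurableSet_Ici, mul_comm, ← div_eq_mul_inv]
    refine ENNReal.div_le_of_le_mul ?_
    by_cases hx : x < a + k
    · have : Set.Ici (a + (k : ℤ)) ∩ Set.Iic x = ∅ := by
        ext y; simp only [Set.mem_inter_iff, Set.mem_Ici, Set.mem_Iic, Set.mem_empty_iff_false, iff_false]; omega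
      rw [this]; simp
    · have hA : μ (Set.Ici (a + (k : ℤ))) = μ (Set.Ici (a + (k : ℤ)) ∩ Set.Iic x) + μ (Set.Ioi x) := by
        rw [← measure_union _ measurableSet_Ioi]
        · congr 1; ext y
          simp only [Set.mem_union, Set.mem_Ici, Set.mem_inter_iff, Set.mem_Iic, Set.mem_Ioi]; omega
        · rw [Set.disjoint_left]; intro y hy hy2
          simp only [Set.mem_inter_iff, Set.mem_Ici, Set.mem_Iic, Set.mem_Ioi] at *; omega
      have h3 : μ (Set.Iic x) + μ (Set.Ioi x) = 1 := by
        rw [← Set.compl_Iic, measure_add_measure_compl measurableSet_Iic, measure_univ]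
      set C := μ (Set.Ici (a + (k : ℤ)) ∩ Set.Iic x) with hC
      have hCF : C ≤ μ (Set.Iic x) := measure_mono Set.inter_subset_right
      calc C = (μ (Set.Iic x) + μ (Set.Ioi x)) * C := by rw [h3, one_mul]
        _ = μ (Set.Iic x) * C + μ (Set.Ioi x) * C := add_mul _ _ _
        _ ≤ μ (Set.Iic x) * C + μ (Set.Ioi x) * μ (Set.Iic x) := by gcongr
        _ = _ := by rw [hA]; ring
  have c2 : ∀ x, μ.real (Set.Iic x) ≤ (μ[|Set.Ici (a + (k : ℤ))]).real (Set.Iic (x + k)) := by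
    intro x
    refine ENNReal.toReal_mono (measure_ne_top _ _) ?_
    rw [cond_apply measurableSet_Ici, mul_comm, ← div_eq_mul_inv,
      ENNReal.le_div_iff_mul_le (Or.inl hG) (Or.inl hGt), Set.Ici_inter_Iic]
    exact aux_cdf μ hLC a hz k x
  have hP : IsProbabilityMeasure (volume.restrict (Set.Ioo (0 : ℝ) 1)) := ⟨by simp⟩
  have hm : Measurable fun u => (Q u, R u - Q u) := hQm.prodMk (hRm.sub hQm)
  refine ⟨Measure.map (fun u => (Q u, R u - Q u)) (volume.restrict (Set.Ioo (0 : ℝ) 1)),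
    Measure.isProbabilityMeasure_map hm.aemeasurable, ?_, ?_, ?_⟩
  · rw [Measure.map_map measurable_fst hm]
    exact hQl
  · rw [ae_map_iff hm.aemeasurable (Set.to_countable _).measurableSet]
    filter_upwards [ae_restrict_mem measurableSet_Ioo] with u hu
    have e1 : Q u ≤ R u := (hQ u hu _).2 (((hR u hu _).1 le_rfl).trans (c1 _))
    have e2 : R u ≤ Q u + k := (hR u hu _).2 (((hQ u hu _).1 le_rfl).trans (c2 _))
    constructor <;> omega
  · rw [Measure.map_map (by fun_prop) hm]
    conv_rhs => rw [← hRl]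
    congr 1
    ext u
    simp
end

section
/- Consider multivariate hypergeometric sampling: an urn contains n = Σ_{α∈[m]} n_α balls, with n_α ≥ 1 balls of color α for each α ∈ [m]; a sample of s ∈ {0,1,…,n} distinct balls is drawn uniformly at random without replacement, and M_α denotes the number of balls of color α in the sample. Let w_α > 0 be weights and d_α ∈ ℤ thresholds such that every indicator 𝟙(M_α ≥ d_α) (respectively 𝟙(M_α ≠ d_α)) is non-constant, and set Y_ge = Σ_{α∈[m]} w_α 𝟙(M_α ≥ d_α) and Y_ne = Σ_{α∈[m]} w_α 𝟙(M_α ≠ d_α), with |w| = max_α w_α. Then there exists a coupling of Y_ge to a variable Y_ge^s having the Y_ge-size bias distribution satisfying Y_ge^s ≤ Y_ge + |w| almost surely, and a coupling of Y_ne to a variable Y_ne^s having the Y_ne-size bias distribution satisfying Y_ne^s ≤ Y_ne + 2|w| almost surely. -/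
open MeasureTheory ProbabilityTheory

/-- There is a bounded size bias coupling for a nonnegative random variable with law
`μY`: a joint law `ν` of a pair `(Y, Yˢ)` such that `Y` has law `μY`, `Yˢ` has the
`Y`-size bias distribution (`E[Y f(Y)] = E[Y] E[f(Yˢ)]` for all bounded measurable `f`),
and `Yˢ ≤ Y + c` almost surely. -/
def ExistsBoundedSizeBiasCoupling (μY : Measure ℝ) (c : ℝ) : Prop :=
  ∃ ν : Measure (ℝ × ℝ), IsProbabilityMeasure ν ∧
    Measure.map Prod.fst ν = μY ∧
    (∀ f : ℝ → ℝ, Measurable f → (∃ C : ℝ, ∀ x, |f x| ≤ C) →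
      ∫ q, q.1 * f q.1 ∂ν = (∫ q, q.1 ∂ν) * ∫ q, f q.2 ∂ν) ∧
    (∀ᵐ q ∂ν, q.2 ≤ q.1 + c)

def Coup {X : Type*} [Fintype X] (R : X → X → Prop) (μ ν : X → ℝ) : Prop :=
  ∃ J : X → X → ℝ, (∀ x y, 0 ≤ J x y) ∧ (∀ x, ∑ y, J x y = μ x) ∧
    (∀ y, ∑ x, J x y = ν y) ∧ ∀ x y, J x y ≠ 0 → R x y

theorem Coup.sum {X ι : Type*} [Fintype X] {R : X → X → Prop} (s : Finset ι) (c : ι → ℝ)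
    (μ ν : ι → X → ℝ) (hc : ∀ i ∈ s, 0 ≤ c i) (h : ∀ i ∈ s, c i ≠ 0 → Coup R (μ i) (ν i)) :
    Coup R (fun x => ∑ i ∈ s, c i * μ i x) (fun x => ∑ i ∈ s, c i * ν i x) := by
  classical
  have h' : ∀ i, ∃ J : X → X → ℝ, (i ∈ s → c i ≠ 0 → ((∀ x y, 0 ≤ J x y) ∧
      (∀ x, ∑ y, J x y = μ i x) ∧
      (∀ y, ∑ x, J x y = ν i y) ∧ ∀ x y, J x y ≠ 0 → R x y)) := by
    intro i
    by_cases hi : i ∈ s ∧ c i ≠ 0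
    · obtain ⟨J, hJ⟩ := h i hi.1 hi.2
      exact ⟨J, fun _ _ => hJ⟩
    · exact ⟨0, fun h1 h2 => absurd ⟨h1, h2⟩ hi⟩
  choose J hJ using h'
  refine ⟨fun x y => ∑ i ∈ s, c i * J i x y, ?_, ?_, ?_, ?_⟩
  · intro x y
    refine Finset.sum_nonneg fun i hi => ?_
    by_cases h0 : c i = 0
    · simp [h0]
    · exact mul_nonneg (hc i hi) ((hJ i hi h0).1 x y)
  · intro x
    rw [Finset.sum_comm]
    refine Finset.sum_congr rfl fun i hi => ?_
    by_cases h0 : c i = 0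
    · simp [h0]
    · rw [← Finset.mul_sum, (hJ i hi h0).2.1 x]
  · intro y
    rw [Finset.sum_comm]
    refine Finset.sum_congr rfl fun i hi => ?_
    by_cases h0 : c i = 0
    · simp [h0]
    · rw [← Finset.mul_sum, (hJ i hi h0).2.2.1 y]
  · intro x y hxy
    obtain ⟨i, hi, hne⟩ := Finset.exists_ne_zero_of_sum_ne_zero hxy
    have h0 : c i ≠ 0 := left_ne_zero_of_mul hne
    exact (hJ i hi h0).2.2.2 x y (right_ne_zero_of_mul hne)

theorem Coup.swap {X : Type*} [Fintype X] {R : X → X → Prop} {μ ν : X → ℝ}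
    (h : Coup R μ ν) : Coup (fun x y => R y x) ν μ := by
  obtain ⟨J, h1, h2, h3, h4⟩ := h
  exact ⟨fun x y => J y x, fun x y => h1 y x, h3, h2, fun x y => h4 y x⟩

theorem Coup.mono {X : Type*} [Fintype X] {R R' : X → X → Prop} {μ ν : X → ℝ}
    (h : Coup R μ ν) (hR : ∀ x y, R x y → R' x y) : Coup R' μ ν := by
  obtain ⟨J, h1, h2, h3, h4⟩ := h
  exact ⟨J, h1, h2, h3, fun x y hxy => hR _ _ (h4 x y hxy)⟩

theorem Coup.refl {X : Type*} [Fintype X] {R : X → X → Prop} {μ : X → ℝ}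
    (h : ∀ x, 0 ≤ μ x) (hR : ∀ x, R x x) : Coup R μ μ := by
  classical
  refine ⟨fun x y => if x = y then μ x else 0, ?_, ?_, ?_, ?_⟩
  · intro x y; dsimp only; split_ifs <;> simp [h]
  · intro x; simp
  · intro x; simp
  · intro x y hxy
    by_cases hh : x = y
    · subst hh; exact hR _
    · simp [hh] at hxy

/-- Final assembly: from a finite coupling to the measure-theoretic one. -/
theorem Coup.toMeasure {Ω X : Type*} [MeasurableSpace Ω] (P : Measure Ω) [IsProbabilityMeasure P]
    [Fintype X] (S : Ω → X) (hS : ∀ T, MeasurableSet {ω | S ω = T}) (μ ν : X → ℝ)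
    (hP : ∀ T, P {ω | S ω = T} = ENNReal.ofReal (μ T)) (hμ : ∀ T, 0 ≤ μ T)
    (Y : X → ℝ) (c : ℝ) (h : Coup (fun x y => Y y ≤ Y x + c) μ ν)
    (hν : ∀ T, (∑ x, Y x * μ x) * ν T = Y T * μ T) :
    ExistsBoundedSizeBiasCoupling (Measure.map (fun ω => Y (S ω)) P) c := by
  classical
  obtain ⟨J, h1, h2, h3, h4⟩ := h
  let ρ : Measure (ℝ × ℝ) := ∑ p : X × X, ENNReal.ofReal (J p.1 p.2) • Measure.dirac (Y p.1, Y p.2)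
  have hmeas : Measurable (fun ω => Y (S ω)) := by
    intro s hs
    have : (fun ω => Y (S ω)) ⁻¹' s = ⋃ T ∈ (Finset.univ.filter fun T => Y T ∈ s), {ω | S ω = T} := by
      ext ω; simp
    rw [this]
    exact Finset.measurableSet_biUnion _ fun T _ => hS T
  have hmap : Measure.map Prod.fst ρ = Measure.map (fun ω => Y (S ω)) P := by
    ext s hs
    rw [Measure.map_apply measurable_fst hs, Measure.map_apply hmeas hs]
    have e : (fun ω => Y (S ω)) ⁻¹' s = ⋃ T ∈ (Finset.univ.filter fun T => Y T ∈ s), {ω | S ω = T} := by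
      ext ω; simp
    rw [e, measure_biUnion_finset]
    · simp only [ρ, Measure.coe_finsetSum, Finset.sum_apply, Measure.smul_apply, smul_eq_mul]
      rw [Fintype.sum_prod_type, Finset.sum_filter]
      refine Finset.sum_congr rfl fun T _ => ?_
      have : ∀ T', (Measure.dirac (Y T, Y T')) (Prod.fst ⁻¹' s) = if Y T ∈ s then 1 else 0 := by
        intro T'
        rw [Measure.dirac_apply' _ (measurable_fst hs)]
        simp [Set.indicator]
      simp only [this]
      split_ifs
      · simp only [mul_one]
        rw [← ENNReal.ofReal_sum_of_nonneg (fun i _ => h1 _ _), h2, hP]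
      · simp
    · intro a _ b _ hab
      rw [Function.onFun, Set.disjoint_left]
      rintro ω (rfl : S ω = a) (h : S ω = b)
      exact hab h
    · exact fun T _ => hS T
  have hint : ∀ g : ℝ × ℝ → ℝ, Measurable g → ∫ q, g q ∂ρ = ∑ x, ∑ y, J x y * g (Y x, Y y) := by
    intro g hg
    have hgi : ∀ p : ℝ × ℝ, Integrable g (Measure.dirac p) := by
      intro p
      exact integrable_dirac (by simp)
    simp only [ρ]
    rw [integral_finsetSum_measure, Fintype.sum_prod_type]
    · refine Finset.sum_congr rfl fun x _ => Finset.sum_congr rfl fun y _ => ?_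
      rw [integral_smul_measure, integral_dirac, ENNReal.toReal_ofReal (h1 _ _), smul_eq_mul]
    · intro p _
      exact (hgi _).smul_measure ENNReal.ofReal_ne_top
  refine ⟨ρ, ?_, hmap, ?_, ?_⟩
  · have : IsProbabilityMeasure (Measure.map Prod.fst ρ) := by
      rw [hmap]; exact Measure.isProbabilityMeasure_map hmeas.aemeasurable
    constructor
    have := this.measure_univ
    rwa [Measure.map_apply measurable_fst MeasurableSet.univ] at this
  · intro f hf _
    rw [hint (fun q => q.1 * f q.1) (by fun_prop), hint (fun q => q.1) (by fun_prop),
      hint (fun q => f q.2) (by fun_prop)]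
    dsimp only
    simp only [← Finset.sum_mul, h2]
    rw [Finset.sum_comm (f := fun x y => J x y * f (Y y))]
    simp only [← Finset.sum_mul, h3]
    rw [Finset.mul_sum]
    refine Finset.sum_congr rfl fun T _ => ?_
    have := hν T
    have e : ∑ x, Y x * μ x = ∑ x, μ x * Y x := Finset.sum_congr rfl fun _ _ => mul_comm _ _
    rw [← e]
    linear_combination (-(f (Y T))) * this
  · simp only [ρ]
    rw [ae_iff]
    simp only [Measure.coe_finsetSum, Finset.sum_apply, Measure.smul_apply, smul_eq_mul]
    refine Finset.sum_eq_zero fun p _ => ?_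
    by_cases h0 : J p.1 p.2 = 0
    · simp [h0]
    · have := h4 _ _ h0
      rw [Measure.dirac_apply]
      simp [this]

/-- mixture over indicators -/
theorem Coup.mixture {Ω X : Type*} [MeasurableSpace Ω] (P : Measure Ω) [IsProbabilityMeasure P]
    [Fintype X] (S : Ω → X) (hS : ∀ T, MeasurableSet {ω | S ω = T}) (B : X → Prop)
    [DecidablePred B] (N : ℝ) (hN : 0 < N)
    (hP : ∀ T, P {ω | S ω = T} = ENNReal.ofReal (if B T then 1 / N else 0))
    {m : ℕ} (hm : 0 < m) (I : Fin m → X → Prop) [∀ a, DecidablePred (I a)] (w : Fin m → ℝ)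
    (hw : ∀ a, 0 < w a) (K : Fin m → ℝ)
    (hKpos : ∀ a, 0 < K a) (hK : ∀ a, (∑ T, if B T ∧ I a T then (1 : ℝ) else 0) = K a)
    (c : ℝ)
    (h : ∀ a, Coup (fun x y => (∑ b, w b * if I b y then (1 : ℝ) else 0) ≤
        (∑ b, w b * if I b x then (1 : ℝ) else 0) + c)
      (fun T => if B T then 1 else 0) (fun T => if B T then (if I a T then N / K a else 0) else 0)) :
    ExistsBoundedSizeBiasCoupling
      (Measure.map (fun ω => ∑ b, w b * if I b (S ω) then (1 : ℝ) else 0) P) c := by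
  have hW : 0 < ∑ a, w a * K a :=
    Finset.sum_pos (fun a _ => mul_pos (hw a) (hKpos a))
      (Finset.univ_nonempty_iff.mpr (Fin.pos_iff_nonempty.mp hm))
  set W := ∑ a, w a * K a with hWdef
  have key := Coup.sum Finset.univ (fun a => w a * K a / W / N) _ _
    (fun a _ => by have := hw a; have := hKpos a; positivity) (fun a _ _ => h a)
  refine Coup.toMeasure P S hS _ _ ?_ ?_ (fun T => ∑ b, w b * if I b T then (1 : ℝ) else 0) c key ?_
  · intro T
    rw [hP]
    congr 1
    by_cases hB : B T
    · simp only [hB, if_true, mul_one]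
      rw [← Finset.sum_div, ← Finset.sum_div, ← hWdef, div_self hW.ne']
    · simp [hB]
  · intro T
    refine Finset.sum_nonneg fun a _ => ?_
    have := hw a; have := hKpos a
    split_ifs <;> positivity
  · have hrow : ∀ T, (∑ a, w a * K a / W / N * if B T then (1:ℝ) else 0) = if B T then 1 / N else 0 := by
      intro T
      by_cases hB : B T
      · simp only [hB, if_true, mul_one]
        rw [← Finset.sum_div, ← Finset.sum_div, ← hWdef, div_self hW.ne']
      · simp [hB]
    have hE : ∑ x, (∑ b, w b * if I b x then (1 : ℝ) else 0) * (if B x then 1 / N else 0) = W / N := by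
      simp only [Finset.sum_mul]
      rw [Finset.sum_comm, hWdef, Finset.sum_div]
      refine Finset.sum_congr rfl fun a _ => ?_
      rw [← hK a, Finset.mul_sum, Finset.sum_div]
      refine Finset.sum_congr rfl fun T _ => ?_
      by_cases h1 : B T <;> by_cases h2 : I a T <;> simp [h1, h2]; rfl
    intro T
    simp only [hrow]
    rw [hE]
    by_cases hB : B T
    · simp only [hB, if_true]
      rw [Finset.mul_sum, Finset.sum_mul]
      refine Finset.sum_congr rfl fun a _ => ?_
      have := (hKpos a).ne'
      split_ifs
      · field_simp
      · simp
    · simp [hB]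

def Lev (n s : ℕ) (A : Finset (Fin n)) (k : ℕ) : Finset (Finset (Fin n)) :=
  Finset.univ.filter fun T => T.card = s ∧ (T ∩ A).card = k

theorem mem_Lev {n s : ℕ} {A : Finset (Fin n)} {k : ℕ} {T : Finset (Fin n)} :
    T ∈ Lev n s A k ↔ T.card = s ∧ (T ∩ A).card = k := by simp [Lev]

/-- Compatibility: move up in `A`, move down outside `A`. -/
def Cmp {n : ℕ} (A T T' : Finset (Fin n)) : Prop := T ∩ A ⊆ T' ∧ T' ∩ Aᶜ ⊆ T

theorem card_compl_inter {n s : ℕ} {A : Finset (Fin n)} {k : ℕ} {T : Finset (Fin n)}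
    (h : T ∈ Lev n s A k) : (T ∩ Aᶜ).card + k = s := by
  rw [mem_Lev] at h
  have := Finset.card_inter_add_card_sdiff T A
  rw [Finset.sdiff_eq_inter_compl] at this
  omega

theorem Lev_compl {n s : ℕ} {A : Finset (Fin n)} {k : ℕ} (hk : k ≤ s) :
    Lev n s Aᶜ (s - k) = Lev n s A k := by
  ext T
  have := Finset.card_inter_add_card_sdiff T A
  rw [Finset.sdiff_eq_inter_compl] at this
  rw [mem_Lev, mem_Lev]
  omega

open Classical in
theorem card_cmp {n s : ℕ} (A : Finset (Fin n)) {k k' : ℕ} (hk : k ≤ k') (hk's : k' ≤ s)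
    {T : Finset (Fin n)} (hT : T ∈ Lev n s A k) :
    ((Lev n s A k').filter fun T' => Cmp A T T').card
      = (A.card - k).choose (k' - k) * (s - k).choose (s - k') := by
  have hc := card_compl_inter hT
  have hT' := mem_Lev.1 hT
  have e1 : (A \ T).card = A.card - k := by
    have := Finset.card_inter_add_card_sdiff A T
    rw [Finset.inter_comm] at this
    omega
  have e2 : (T ∩ Aᶜ).card = s - k := by omega
  rw [← e1, ← e2, ← Finset.card_powersetCard, ← Finset.card_powersetCard, ← Finset.card_product]
  refine Finset.card_nbij' (fun T' => (T' ∩ (A \ T), T' ∩ Aᶜ)) (fun p => (T ∩ A) ∪ p.1 ∪ p.2)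
    ?_ ?_ ?_ ?_
  · intro T' h
    simp only [Finset.coe_filter, Set.mem_ofPred_eq] at h
    obtain ⟨h1, h2, h3⟩ := h
    have h1c := card_compl_inter h1
    have h1m := mem_Lev.1 h1
    simp only [Finset.coe_product, Set.mem_prod, Finset.mem_coe, Finset.mem_powersetCard]
    refine ⟨⟨Finset.inter_subset_right, ?_⟩, ?_, by omega⟩
    · have : T' ∩ A = (T' ∩ (A \ T)) ∪ (T ∩ A) := by
        ext x
        have := @h2 x
        simp only [Finset.mem_inter, Finset.mem_union, Finset.mem_sdiff] at *
        tauto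
      have h5 : (T' ∩ A).card = (T' ∩ (A \ T)).card + (T ∩ A).card := by
        rw [this, Finset.card_union_of_disjoint]
        rw [Finset.disjoint_left]; intro x
        simp only [Finset.mem_inter, Finset.mem_sdiff]
        tauto
      omega
    · intro x hx
      have := h3 hx
      simp only [Finset.mem_inter] at *
      tauto
  · rintro ⟨E, F⟩ h
    simp only [Finset.coe_product, Set.mem_prod, Finset.mem_coe, Finset.mem_powersetCard] at h
    obtain ⟨⟨h1, h2⟩, h3, h4⟩ := h
    have f1 : ((T ∩ A) ∪ E ∪ F) ∩ A = (T ∩ A) ∪ E := by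
      ext x
      have := @h1 x
      have := @h3 x
      simp only [Finset.mem_inter, Finset.mem_union, Finset.mem_sdiff, Finset.mem_compl] at *
      tauto
    have f2 : ((T ∩ A) ∪ E).card = (T ∩ A).card + E.card := by
      rw [Finset.card_union_of_disjoint]
      rw [Finset.disjoint_left]; intro x
      have := @h1 x
      simp only [Finset.mem_inter, Finset.mem_sdiff] at *
      tauto
    have f3 : ((T ∩ A) ∪ E ∪ F).card = ((T ∩ A) ∪ E).card + F.card := by
      rw [Finset.card_union_of_disjoint]
      rw [Finset.disjoint_left]; intro x
      have := @h1 x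
      have := @h3 x
      simp only [Finset.mem_inter, Finset.mem_union, Finset.mem_sdiff, Finset.mem_compl] at *
      tauto
    simp only [Finset.coe_filter, Set.mem_ofPred_eq, mem_Lev]
    rw [f1]
    refine ⟨⟨by omega, by omega⟩, ?_, ?_⟩
    · intro x
      simp only [Finset.mem_union]
      tauto
    · intro x
      have := @h1 x
      have := @h3 x
      simp only [Finset.mem_inter, Finset.mem_union, Finset.mem_sdiff, Finset.mem_compl] at *
      tauto
  · intro T' h
    simp only [Finset.coe_filter, Set.mem_ofPred_eq] at h
    obtain ⟨h1, h2, h3⟩ := h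
    ext x
    have := @h2 x
    have := @h3 x
    simp only [Finset.mem_inter, Finset.mem_union, Finset.mem_sdiff, Finset.mem_compl] at *
    tauto
  · rintro ⟨E, F⟩ h
    simp only [Finset.coe_product, Set.mem_prod, Finset.mem_coe, Finset.mem_powersetCard] at h
    obtain ⟨⟨h1, h2⟩, h3, h4⟩ := h
    ext x
    · have := @h1 x
      have := @h3 x
      simp only [Finset.mem_inter, Finset.mem_union, Finset.mem_sdiff, Finset.mem_compl] at *
      tauto
    · have := @h1 x
      have := @h3 x
      simp only [Finset.mem_inter, Finset.mem_union, Finset.mem_sdiff, Finset.mem_compl] at *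
      tauto

open Classical in
theorem card_cmp' {n s : ℕ} (A : Finset (Fin n)) {k k' : ℕ} (hk : k ≤ k') (hk's : k' ≤ s)
    {T' : Finset (Fin n)} (hT : T' ∈ Lev n s A k') :
    ((Lev n s A k).filter fun T => Cmp A T T').card
      = (Aᶜ.card - (s - k')).choose (k' - k) * k'.choose k := by
  rw [← Lev_compl hk's] at hT
  have := card_cmp (k' := s - k) Aᶜ (by omega) (by omega) hT
  rw [Lev_compl (by omega)] at this
  have e1 : s - k - (s - k') = k' - k := by omega
  have e2 : s - (s - k') = k' := by omega
  have e3 : s - (s - k) = k := by omega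
  rw [e1, e2, e3] at this
  rw [← this]
  congr 1
  ext T
  simp [Cmp, and_comm]

theorem Lev_double {n s : ℕ} (A : Finset (Fin n)) {k k' : ℕ} (hk : k ≤ k') (hk's : k' ≤ s) :
    (Lev n s A k).card * ((A.card - k).choose (k' - k) * (s - k).choose (s - k')) =
    (Lev n s A k').card * ((Aᶜ.card - (s - k')).choose (k' - k) * k'.choose k) := by
  classical
  have := Finset.sum_card_bipartiteAbove_eq_sum_card_bipartiteBelow (s := Lev n s A k)
    (t := Lev n s A k') (Cmp A)
  simp only [Finset.bipartiteAbove, Finset.bipartiteBelow] at this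
  rw [Finset.sum_congr rfl (fun T hT => card_cmp A hk hk's hT),
    Finset.sum_congr rfl (fun T hT => card_cmp' A hk hk's hT)] at this
  simpa using this

theorem Lev_bounds {n s : ℕ} {A : Finset (Fin n)} {k : ℕ} (h : (Lev n s A k).card ≠ 0) :
    k ≤ s ∧ k ≤ A.card ∧ s - k ≤ Aᶜ.card := by
  obtain ⟨T, hT⟩ := Finset.card_ne_zero.1 h
  have := card_compl_inter hT
  have h2 := mem_Lev.1 hT
  have h3 := Finset.card_le_card (Finset.inter_subset_right : T ∩ A ⊆ A)
  have h4 := Finset.card_le_card (Finset.inter_subset_right : T ∩ Aᶜ ⊆ Aᶜ)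
  omega

open Classical in
noncomputable def unifLev (n s : ℕ) (A : Finset (Fin n)) (k : ℕ) (T : Finset (Fin n)) : ℝ :=
  if T ∈ Lev n s A k then 1 / (Lev n s A k).card else 0

theorem Coup_up {n s : ℕ} (A : Finset (Fin n)) {k k' : ℕ} (hk : k ≤ k')
    (h1 : (Lev n s A k).card ≠ 0) (h2 : (Lev n s A k').card ≠ 0) :
    Coup (fun T T' => T ∈ Lev n s A k ∧ T' ∈ Lev n s A k' ∧ Cmp A T T')
      (unifLev n s A k) (unifLev n s A k') := by
  classical
  have b1 := Lev_bounds h1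
  have b2 := Lev_bounds h2
  have hd := Lev_double A hk b2.1
  set c1 := (A.card - k).choose (k' - k) * (s - k).choose (s - k') with hc1
  set c2 := (Aᶜ.card - (s - k')).choose (k' - k) * k'.choose k with hc2
  have c1pos : 0 < c1 := Nat.mul_pos (Nat.choose_pos (by omega)) (Nat.choose_pos (by omega))
  have r1 : (c1 : ℝ) ≠ 0 := by exact_mod_cast c1pos.ne'
  have r2 : ((Lev n s A k).card : ℝ) ≠ 0 := by exact_mod_cast h1
  have r3 : ((Lev n s A k').card : ℝ) ≠ 0 := by exact_mod_cast h2
  have hdr : ((Lev n s A k).card : ℝ) * c1 = (Lev n s A k').card * c2 := by exact_mod_cast hd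
  refine ⟨fun T T' => if T ∈ Lev n s A k ∧ T' ∈ Lev n s A k' ∧ Cmp A T T' then
    1 / ((Lev n s A k).card * c1 : ℝ) else 0, ?_, ?_, ?_, ?_⟩
  · intro x y; dsimp only; split_ifs <;> positivity
  · intro T
    rw [unifLev]
    split_ifs with hT
    · simp only [hT, true_and]
      rw [← Finset.sum_filter, Finset.sum_const]
      have : (Finset.univ.filter fun T' => T' ∈ Lev n s A k' ∧ Cmp A T T')
        = (Lev n s A k').filter fun T' => Cmp A T T' := by ext; simp
      rw [this, card_cmp A hk b2.1 hT, ← hc1, nsmul_eq_mul]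
      field_simp
    · simp [hT]
  · intro T'
    rw [unifLev]
    split_ifs with hT
    · simp only [hT, true_and]
      rw [← Finset.sum_filter, Finset.sum_const]
      have : (Finset.univ.filter fun T => T ∈ Lev n s A k ∧ Cmp A T T')
        = (Lev n s A k).filter fun T => Cmp A T T' := by ext; simp
      rw [this, card_cmp' A hk b2.1 hT, ← hc2, nsmul_eq_mul, hdr]
      have : (c2 : ℝ) ≠ 0 := by
        intro h0
        rw [h0, mul_zero] at hdr
        exact (mul_ne_zero r2 r1) hdr
      field_simp
    · simp [hT]
  · intro x y h
    by_contra hn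
    simp [hn] at h

/-- Lift of a coupling of levels. -/
theorem Coup_lift {n s : ℕ} (A : Finset (Fin n)) (R : Finset (Fin n) → Finset (Fin n) → Prop)
    (π : ℕ → ℕ → ℝ) (hπ : ∀ k k', 0 ≤ π k k')
    (h : ∀ k k', π k k' ≠ 0 → Coup R (unifLev n s A k) (unifLev n s A k')) (a b : ℕ → ℝ)
    (ha : ∀ k ∈ Finset.range (n + 1), ∑ k' ∈ Finset.range (n + 1), π k k' = a k * (Lev n s A k).card)
    (hb : ∀ k' ∈ Finset.range (n + 1), ∑ k ∈ Finset.range (n + 1), π k k' = b k' * (Lev n s A k').card) :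
    Coup R (fun T => if T.card = s then a (T ∩ A).card else 0)
      (fun T => if T.card = s then b (T ∩ A).card else 0) := by
  classical
  have key := Coup.sum (R := R) (Finset.range (n + 1) ×ˢ Finset.range (n + 1))
    (fun p => π p.1 p.2) (fun p => unifLev n s A p.1) (fun p => unifLev n s A p.2)
    (fun p _ => hπ _ _) (fun p _ hp => h _ _ hp)
  have ev : ∀ (c : ℕ → ℝ) (g : ℕ → ℝ), (∀ k ∈ Finset.range (n+1), g k = c k * (Lev n s A k).card) →
      ∀ T, ∑ k ∈ Finset.range (n + 1), g k * unifLev n s A k T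
        = if T.card = s then c (T ∩ A).card else 0 := by
    intro c g hg T
    have hr : (T ∩ A).card ∈ Finset.range (n + 1) := by
      have := Finset.card_le_univ (T ∩ A)
      simp at this ⊢; omega
    rw [Finset.sum_eq_single_of_mem _ hr]
    · rw [hg _ hr, unifLev]
      by_cases hs : T.card = s
      · have hT : T ∈ Lev n s A (T ∩ A).card := mem_Lev.2 ⟨hs, rfl⟩
        have : ((Lev n s A (T ∩ A).card).card : ℝ) ≠ 0 := by
          exact_mod_cast Finset.card_ne_zero_of_mem hT
        rw [if_pos hT, if_pos hs]
        field_simp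
      · simp [hs, mem_Lev]
    · intro k _ hk
      rw [unifLev, if_neg, mul_zero]
      rw [mem_Lev]; rintro ⟨_, h⟩; exact hk h.symm
  convert key using 1
  · ext T
    rw [← ev a _ ha T, Finset.sum_product]
    exact Finset.sum_congr rfl fun k _ => Finset.sum_mul _ _ _
  · ext T
    rw [← ev b _ hb T, Finset.sum_product, Finset.sum_comm]
    exact Finset.sum_congr rfl fun k _ => Finset.sum_mul _ _ _

/-- log-concavity of level sizes -/
theorem Lev_step {n s : ℕ} (A : Finset (Fin n)) {j d : ℕ} (hjd : j ≤ d) :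
    (Lev n s A j).card * (Lev n s A (d + 1)).card ≤ (Lev n s A (j + 1)).card * (Lev n s A d).card := by
  by_cases h1 : (Lev n s A j).card = 0
  · simp [h1]
  by_cases h2 : (Lev n s A (d + 1)).card = 0
  · simp [h2]
  have b1 := Lev_bounds h1
  have b2 := Lev_bounds h2
  have e : ∀ k, k + 1 ≤ s → (Lev n s A k).card * ((A.card - k) * (s - k)) =
      (Lev n s A (k + 1)).card * ((Aᶜ.card - (s - (k + 1))) * (k + 1)) := by
    intro k hk
    have := Lev_double (s := s) A (Nat.le_succ k) hk
    have e1 : k.succ - k = 1 := by omega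
    have e2 : (s - k).choose (s - k.succ) = s - k := by
      have : s - k = (s - k.succ) + 1 := by omega
      rw [this, Nat.choose_succ_self_right]
    rw [e1, e2, Nat.choose_one_right, Nat.choose_one_right, Nat.choose_succ_self_right] at this
    exact this
  have ej := e j (by omega)
  have ed := e d (by omega)
  set x := fun k => (Lev n s A k).card
  have hu : (A.card - d) * (s - d) ≤ (A.card - j) * (s - j) :=
    Nat.mul_le_mul (by omega) (by omega)
  have hv : (Aᶜ.card - (s - (j + 1))) * (j + 1) ≤ (Aᶜ.card - (s - (d + 1))) * (d + 1) :=
    Nat.mul_le_mul (by omega) (by omega)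
  have hvpos : 0 < (Aᶜ.card - (s - (j + 1))) * (j + 1) := Nat.mul_pos (by omega) (by omega)
  set uj := (A.card - j) * (s - j)
  set ud := (A.card - d) * (s - d)
  set vj := (Aᶜ.card - (s - (j + 1))) * (j + 1)
  set vd := (Aᶜ.card - (s - (d + 1))) * (d + 1)
  refine Nat.le_of_mul_le_mul_right (c := vj * vd) ?_ (Nat.mul_pos hvpos (by omega))
  calc (Lev n s A j).card * (Lev n s A (d + 1)).card * (vj * vd)
      = (Lev n s A j).card * vj * ((Lev n s A (d + 1)).card * vd) := by ring
    _ = (Lev n s A j).card * (Lev n s A d).card * (vj * ud) := by rw [← ed]; ring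
    _ ≤ (Lev n s A j).card * (Lev n s A d).card * (vd * uj) :=
        Nat.mul_le_mul_left _ (Nat.mul_le_mul hv hu)
    _ = ((Lev n s A j).card * uj) * ((Lev n s A d).card * vd) := by ring
    _ = _ := by rw [ej]; ring

theorem logconc_of_step (x : ℕ → ℕ) (h : ∀ j d, j ≤ d → x j * x (d + 1) ≤ x (j + 1) * x d) :
    ∀ i j k l d, k = j + i → d = l + i → j ≤ l → x j * x d ≤ x k * x l := by
  have main : ∀ i j k l d, k = j + i → d = l + i → k ≤ l → x j * x d ≤ x k * x l := by
    intro i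
    induction i with
    | zero => rintro j k l d rfl rfl _; simp
    | succ i ih =>
      rintro j k l d rfl rfl hkl
      calc x j * x (l + (i + 1)) ≤ x (j + 1) * x (l + i) := h j (l + i) (by omega)
        _ ≤ _ := ih (j + 1) (j + (i + 1)) l (l + i) (by omega) rfl hkl
  intro i j k l d h1 h2 h3
  rcases le_total k l with hkl | hkl
  · exact main i j k l d h1 h2 hkl
  · rw [mul_comm (x k)]
    exact main (l - j) j l k d (by omega) (by omega) hkl

theorem ge_levels (x : ℕ → ℝ) (n : ℕ) (hx : ∀ k, 0 ≤ x k) (good : ℕ → Prop) [DecidablePred good]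
    (N K : ℝ) (hN : N = ∑ k ∈ Finset.range (n + 1), x k)
    (hK : K = ∑ k ∈ Finset.range (n + 1), if good k then x k else 0) (hKpos : 0 < K) :
    ∃ π : ℕ → ℕ → ℝ, (∀ k k', 0 ≤ π k k') ∧
      (∀ k k', π k k' ≠ 0 → x k ≠ 0 ∧ x k' ≠ 0 ∧ (k = k' ∨ (¬ good k ∧ good k'))) ∧
      (∀ k ∈ Finset.range (n + 1), ∑ k' ∈ Finset.range (n + 1), π k k' = 1 * x k) ∧
      (∀ k' ∈ Finset.range (n + 1), ∑ k ∈ Finset.range (n + 1), π k k'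
        = (if good k' then N / K else 0) * x k') := by
  refine ⟨fun k k' => (if k = k' then (if good k then x k else 0) else 0) +
    (if ¬ good k then (if good k' then x k * x k' / K else 0) else 0), ?_, ?_, ?_, ?_⟩
  · intro k k'
    have := hx k
    have := hx k'
    dsimp only
    split_ifs <;> positivity
  · intro k k' h
    by_cases h1 : good k <;> by_cases h2 : k = k' <;> by_cases h3 : good k' <;>
      simp_all
  · intro k hk
    rw [Finset.sum_add_distrib, Finset.sum_ite_eq, if_pos hk]
    by_cases h : good k
    · simp [h]
    · simp only [h, not_false_eq_true, if_true, if_false]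
      have : ∀ k', (if good k' then x k * x k' / K else 0) = x k / K * (if good k' then x k' else 0) := by
        intro k'; split_ifs
        · ring
        · ring
      simp only [this]
      rw [← Finset.mul_sum, ← hK]
      field_simp
      ring
  · intro k hk
    rw [Finset.sum_add_distrib, Finset.sum_ite_eq', if_pos hk]
    by_cases h : good k
    · simp only [h, if_true]
      have : ∀ k', (if ¬ good k' then x k' * x k / K else 0)
          = x k / K * (x k' - if good k' then x k' else 0) := by
        intro k'; by_cases h' : good k'
        · simp [h']
        · simp [h']; ring
      simp only [this]
      rw [← Finset.mul_sum, Finset.sum_sub_distrib, ← hK, ← hN]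
      field_simp
      ring
    · simp [h]

theorem ne_levels (x : ℕ → ℝ) (n d : ℕ) (hx : ∀ k, 0 ≤ x k) (hxn : ∀ k, n < k → x k = 0)
    (lc : ∀ i j k l d, k = j + i → d = l + i → j ≤ l → x j * x d ≤ x k * x l)
    (N K : ℝ) (hN : N = ∑ k ∈ Finset.range (n + 1), x k) (hNK : N = K + x d)
    (hKpos : 0 < K) (hd : 0 < x d) :
    ∃ π : ℕ → ℕ → ℝ, (∀ k k', 0 ≤ π k k') ∧
      (∀ k k', π k k' ≠ 0 → x k ≠ 0 ∧ x k' ≠ 0 ∧ (k = k' ∨ k' = k + 1 ∨ k = k' + 1)) ∧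
      (∀ k ∈ Finset.range (n + 1), ∑ k' ∈ Finset.range (n + 1), π k k' = 1 * x k) ∧
      (∀ k' ∈ Finset.range (n + 1), ∑ k ∈ Finset.range (n + 1), π k k'
        = (if k' ≠ d then N / K else 0) * x k') := by
  have hdn : d ≤ n := by
    by_contra h
    exact hd.ne' (hxn d (by omega))
  have hNpos : 0 < N := by linarith
  obtain ⟨F, hF⟩ : ∃ F : ℕ → ℝ, ∀ k, F k = ∑ j ∈ Finset.range k, x j := ⟨_, fun _ => rfl⟩
  have F0 : F 0 = 0 := by simp [hF]
  have Fs : ∀ k, F (k + 1) = F k + x k := fun k => by rw [hF, hF, Finset.sum_range_succ]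
  have Fnn : ∀ k, 0 ≤ F k := fun k => by rw [hF]; exact Finset.sum_nonneg fun j _ => hx j
  have Fm : Monotone F := monotone_nat_of_le_succ fun k => by rw [Fs]; linarith [hx k]
  have FN : F (n + 1) = N := by rw [hF, hN]
  have Fbig : ∀ i, F (n + 1 + i) = N := by
    intro i
    induction i with
    | zero => exact FN
    | succ i ih => rw [← add_assoc, Fs, ih, hxn _ (by omega), add_zero]
  have FleN : ∀ k, F k ≤ N := fun k => by
    rw [← Fbig k]; exact Fm (by omega)
  have Fadd : ∀ a b, F (a + b) = F a + ∑ j ∈ Finset.range b, x (a + j) := fun a b => by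
    rw [hF, hF, Finset.sum_range_add]
  have low : ∀ k, k ≤ d → x d * F (k + 1) ≤ x k * N := by
    intro k hk
    calc x d * F (k + 1) = ∑ j ∈ Finset.range (k + 1), x j * x d := by
          rw [hF, ← Finset.sum_mul, mul_comm]
      _ ≤ ∑ j ∈ Finset.range (k + 1), x k * x (d - k + j) := by
          refine Finset.sum_le_sum fun j hj => ?_
          rw [Finset.mem_range] at hj
          exact lc (k - j) j k (d - k + j) d (by omega) (by omega) (by omega)
      _ = x k * (F (d - k + (k + 1)) - F (d - k)) := by rw [Fadd, ← Finset.mul_sum]; ring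
      _ ≤ x k * N := by
          refine mul_le_mul_of_nonneg_left ?_ (hx k)
          linarith [FleN (d - k + (k + 1)), Fnn (d - k)]
  have up : ∀ k, d ≤ k → x d * (N - F k) ≤ x k * N := by
    intro k hk
    by_cases hkn : k ≤ n
    · have : N - F k = ∑ j ∈ Finset.range (n + 1 - k), x (k + j) := by
        have := Fadd k (n + 1 - k)
        rw [show k + (n + 1 - k) = n + 1 by omega, FN] at this
        linarith
      calc x d * (N - F k) = ∑ j ∈ Finset.range (n + 1 - k), x d * x (k + j) := by
            rw [this, ← Finset.mul_sum]
        _ ≤ ∑ j ∈ Finset.range (n + 1 - k), x k * x (d + j) := by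
            refine Finset.sum_le_sum fun j _ => ?_
            exact lc (k - d) d k (d + j) (k + j) (by omega) (by omega) (by omega)
        _ = x k * (F (d + (n + 1 - k)) - F d) := by rw [Fadd, ← Finset.mul_sum]; ring
        _ ≤ x k * N := by
            refine mul_le_mul_of_nonneg_left ?_ (hx k)
            linarith [FleN (d + (n + 1 - k)), Fnn d]
    · have := Fbig (k - (n + 1))
      rw [show n + 1 + (k - (n + 1)) = k by omega] at this
      rw [this, sub_self, mul_zero]
      exact mul_nonneg (hx k) hNpos.le
  obtain ⟨ρ, hρ⟩ : ∃ ρ : ℝ, ρ = x d / K := ⟨_, rfl⟩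
  have hρ0 : 0 ≤ ρ := by rw [hρ]; positivity
  have hρK : ρ * K = x d := by rw [hρ]; field_simp
  have low' : ∀ k, k ≤ d → ρ * F k ≤ x k := by
    intro k hk
    have := low k hk
    rw [Fs, hNK] at this
    rw [hρ, div_mul_eq_mul_div, div_le_iff₀ hKpos]
    linarith
  have up' : ∀ k, d ≤ k → ρ * (N - F (k + 1)) ≤ x k := by
    intro k hk
    have := up k hk
    rw [Fs]
    rw [hρ, div_mul_eq_mul_div, div_le_iff₀ hKpos]
    have e : x k * N = x k * K + x k * x d := by rw [hNK]; ring
    linarith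
  have xpos_low : ∀ k, k ≤ d → 0 < F (k + 1) → x k ≠ 0 := by
    intro k hk h h0
    have := low k hk
    rw [h0, zero_mul] at this
    linarith [mul_pos hd h]
  have xpos_up : ∀ k, d ≤ k → 0 < N - F k → x k ≠ 0 := by
    intro k hk h h0
    have := up k hk
    rw [h0, zero_mul] at this
    linarith [mul_pos hd h]
  refine ⟨fun k k' => (if k = k' + 1 then (if k ≤ d then ρ * F k else 0) else 0) +
    (if k' = k + 1 then (if d ≤ k then ρ * (N - F (k + 1)) else 0) else 0) +
    (if k = k' then (if k < d then x k - ρ * F k else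
      if d < k then x k - ρ * (N - F (k + 1)) else 0) else 0), ?_, ?_, ?_, ?_⟩
  · intro k k'
    dsimp only
    refine add_nonneg (add_nonneg ?_ ?_) ?_
    · split_ifs
      · exact mul_nonneg hρ0 (Fnn _)
      · exact le_rfl
      · exact le_rfl
    · split_ifs
      · exact mul_nonneg hρ0 (by linarith [FleN (k + 1)])
      · exact le_rfl
      · exact le_rfl
    · split_ifs with h1 h2 h3
      · linarith [low' k h2.le]
      · linarith [up' k h3.le]
      · exact le_rfl
      · exact le_rfl
  · intro k k' h
    dsimp only at h
    by_cases c1 : k = k' + 1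
    · subst c1
      rw [if_pos rfl, if_neg (show ¬ k' = k' + 1 + 1 by omega), if_neg (show ¬ k' + 1 = k' by omega),
        add_zero, add_zero] at h
      split_ifs at h with h1
      · have hp : 0 < F (k' + 1) := lt_of_le_of_ne (Fnn _) (Ne.symm (right_ne_zero_of_mul h))
        exact ⟨xpos_low _ h1 (lt_of_lt_of_le hp (Fm (by omega))), xpos_low k' (by omega) hp,
          Or.inr (Or.inr rfl)⟩
      · exact absurd rfl h
    by_cases c2 : k' = k + 1
    · subst c2
      rw [if_neg c1, if_pos rfl, if_neg (show ¬ k = k + 1 by omega), add_zero, zero_add] at h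
      split_ifs at h with h1
      · have hp : 0 < N - F (k + 1) := lt_of_le_of_ne (by linarith [FleN (k + 1)])
          (Ne.symm (right_ne_zero_of_mul h))
        have hm : F k ≤ F (k + 1) := Fm (by omega)
        exact ⟨xpos_up k h1 (by linarith), xpos_up (k + 1) (by omega) hp, Or.inr (Or.inl rfl)⟩
      · exact absurd rfl h
    rw [if_neg c1, if_neg c2, zero_add, zero_add] at h
    by_cases c3 : k = k'
    · subst c3
      rw [if_pos rfl] at h
      have : x k ≠ 0 := by
        intro h0
        apply h
        split_ifs with h1 h2
        · have := low' k h1.le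
          have := mul_nonneg hρ0 (Fnn k)
          linarith
        · have := up' k h2.le
          have := mul_nonneg hρ0 (sub_nonneg.2 (FleN (k + 1)))
          linarith
        · rfl
      exact ⟨this, this, Or.inl rfl⟩
    · rw [if_neg c3] at h
      exact absurd rfl h
  · intro k hk
    rw [Finset.mem_range] at hk
    rw [Finset.sum_add_distrib, Finset.sum_add_distrib, Finset.sum_ite_eq,
      if_pos (Finset.mem_range.2 hk)]
    have s1 : ∑ k' ∈ Finset.range (n + 1), (if k = k' + 1 then (if k ≤ d then ρ * F k else 0) else 0)
        = if k ≤ d then ρ * F k else 0 := by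
      rcases k with _ | k
      · simp [F0]
      · simp only [Nat.add_right_cancel_iff]
        rw [Finset.sum_ite_eq, if_pos (Finset.mem_range.2 (by omega))]
    have s2 : ∑ k' ∈ Finset.range (n + 1), (if k' = k + 1 then (if d ≤ k then ρ * (N - F (k + 1)) else 0) else 0)
        = if d ≤ k then ρ * (N - F (k + 1)) else 0 := by
      rw [Finset.sum_ite_eq']
      by_cases h : k = n
      · subst h; simp [FN]
      · rw [if_pos (Finset.mem_range.2 (by omega))]
    rw [s1, s2]
    rcases lt_trichotomy k d with h | h | h
    · rw [if_pos h.le, if_neg (by omega), if_pos h]; ring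
    · subst h
      rw [if_pos le_rfl, if_pos le_rfl, if_neg (lt_irrefl _), if_neg (lt_irrefl _), Fs, hNK]
      linear_combination hρK
    · rw [if_neg (by omega), if_pos h.le, if_neg (by omega), if_pos h]; ring
  · intro k hk
    rw [Finset.mem_range] at hk
    rw [Finset.sum_add_distrib, Finset.sum_add_distrib, Finset.sum_ite_eq' _ k,
      if_pos (Finset.mem_range.2 hk)]
    have s1 : ∑ j ∈ Finset.range (n + 1), (if j = k + 1 then (if j ≤ d then ρ * F j else 0) else 0)
        = if k + 1 ≤ d then ρ * F (k + 1) else 0 := by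
      rw [Finset.sum_ite_eq']
      by_cases h : k = n
      · subst h; rw [if_neg (by simp), if_neg (by omega)]
      · rw [if_pos (Finset.mem_range.2 (by omega))]
    have s2 : ∑ j ∈ Finset.range (n + 1), (if k = j + 1 then (if d ≤ j then ρ * (N - F (j + 1)) else 0) else 0)
        = if d + 1 ≤ k then ρ * (N - F k) else 0 := by
      rcases k with _ | k
      · simp
      · simp only [Nat.add_right_cancel_iff]
        rw [Finset.sum_ite_eq, if_pos (Finset.mem_range.2 (by omega))]
        simp
    rw [s1, s2]
    have hNKρ : N / K = 1 + ρ := by rw [hρ, hNK]; field_simp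
    rcases lt_trichotomy k d with h | h | h
    · rw [if_pos (by omega), if_neg (by omega), if_pos h, if_pos h.ne, hNKρ, Fs]; ring
    · subst h
      simp
    · rw [if_neg (by omega), if_pos (by omega), if_neg (by omega), if_pos h, if_pos h.ne', hNKρ, Fs]
      ring

theorem sum_levels {n s : ℕ} (A : Finset (Fin n)) (good : ℕ → Prop) [DecidablePred good] :
    (∑ T : Finset (Fin n), if T.card = s ∧ good (T ∩ A).card then (1 : ℝ) else 0)
      = ∑ k ∈ Finset.range (n + 1), if good k then ((Lev n s A k).card : ℝ) else 0 := by
  have : ∀ k, (if good k then ((Lev n s A k).card : ℝ) else 0) =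
      ∑ T : Finset (Fin n), if (T ∩ A).card = k then
        (if T.card = s ∧ good (T ∩ A).card then (1 : ℝ) else 0) else 0 := by
    intro k
    rw [Lev, Finset.card_filter]
    push_cast
    split_ifs with h
    · refine Finset.sum_congr rfl fun T _ => ?_
      by_cases h1 : (T ∩ A).card = k
      · subst h1; simp [h]
      · simp [h1]
    · symm
      refine Finset.sum_eq_zero fun T _ => ?_
      by_cases h1 : (T ∩ A).card = k
      · subst h1; simp [h]
      · simp [h1]
  simp only [this]
  rw [Finset.sum_comm]
  refine Finset.sum_congr rfl fun T _ => ?_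
  have hr : (T ∩ A).card ∈ Finset.range (n + 1) := by
    have := Finset.card_le_univ (T ∩ A)
    simp at this ⊢; omega
  rw [Finset.sum_ite_eq, if_pos hr]

theorem sum_levels_all {n s : ℕ} (A : Finset (Fin n)) :
    (n.choose s : ℝ) = ∑ k ∈ Finset.range (n + 1), ((Lev n s A k).card : ℝ) := by
  have := sum_levels (s := s) A (fun _ => True)
  simp only [and_true, if_true] at this
  rw [← this, ← Finset.sum_filter, Finset.sum_const, nsmul_eq_mul, mul_one]
  congr 1
  have h := Finset.card_powersetCard s (Finset.univ : Finset (Fin n))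
  rw [Finset.card_univ, Fintype.card_fin] at h
  rw [← h]
  congr 1
  ext T; simp [Finset.mem_powersetCard]

theorem ge_bound {n m : ℕ} (A : Fin m → Finset (Fin n)) (hA : ∀ a b, a ≠ b → Disjoint (A a) (A b))
    (w : Fin m → ℝ) (hw : ∀ a, 0 < w a) (d : Fin m → ℤ) (W : ℝ) (hW : ∀ a, w a ≤ W)
    (a : Fin m) (T T' : Finset (Fin n)) (h : Cmp (A a) T T') :
    (∑ b, w b * if d b ≤ ((T' ∩ A b).card : ℤ) then (1 : ℝ) else 0) ≤
      (∑ b, w b * if d b ≤ ((T ∩ A b).card : ℤ) then (1 : ℝ) else 0) + W := by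
  have e : ∑ b, (if b = a then w b else 0) = w a := by simp
  have : (∑ b, w b * if d b ≤ ((T' ∩ A b).card : ℤ) then (1 : ℝ) else 0) ≤
      (∑ b, w b * if d b ≤ ((T ∩ A b).card : ℤ) then (1 : ℝ) else 0) +
        ∑ b, (if b = a then w b else 0) := by
    rw [← Finset.sum_add_distrib]
    refine Finset.sum_le_sum fun b _ => ?_
    have hwb := hw b
    by_cases hb : b = a
    · rw [if_pos hb]
      split_ifs <;> linarith
    · rw [if_neg hb, add_zero]
      refine mul_le_mul_of_nonneg_left ?_ hwb.le
      have hsub : T' ∩ A b ⊆ T ∩ A b := by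
        intro x hx
        rw [Finset.mem_inter] at hx ⊢
        refine ⟨h.2 ?_, hx.2⟩
        rw [Finset.mem_inter, Finset.mem_compl]
        exact ⟨hx.1, Finset.disjoint_left.1 (hA b a hb) hx.2⟩
      have := Finset.card_le_card hsub
      split_ifs
      · exact le_rfl
      · omega
      · exact zero_le_one
      · exact le_rfl
  linarith [hW a]

theorem ne_bound {n m : ℕ} (col : Fin n → Fin m) (A : Fin m → Finset (Fin n))
    (hA : ∀ a i, i ∈ A a ↔ col i = a)
    (w : Fin m → ℝ) (hw : ∀ a, 0 < w a) (d : Fin m → ℤ) (W : ℝ) (hW : ∀ a, w a ≤ W)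
    (a : Fin m) (s k : ℕ) (T T' : Finset (Fin n)) (hT : T ∈ Lev n s (A a) k)
    (hT' : T' ∈ Lev n s (A a) (k + 1)) (h : Cmp (A a) T T') :
    |(∑ b, w b * if ((T' ∩ A b).card : ℤ) ≠ d b then (1 : ℝ) else 0) -
      (∑ b, w b * if ((T ∩ A b).card : ℤ) ≠ d b then (1 : ℝ) else 0)| ≤ 2 * W := by
  have c1 := card_compl_inter hT
  have c2 := card_compl_inter hT'
  have hsub : T' ∩ (A a)ᶜ ⊆ T ∩ (A a)ᶜ := Finset.subset_inter h.2 Finset.inter_subset_right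
  have hcard : ((T ∩ (A a)ᶜ) \ (T' ∩ (A a)ᶜ)).card = 1 := by
    rw [Finset.card_sdiff_of_subset hsub]; omega
  obtain ⟨i, hi⟩ := Finset.card_eq_one.1 hcard
  have same : ∀ b, b ≠ a → b ≠ col i → T' ∩ A b = T ∩ A b := by
    intro b hb hbi
    ext x
    have h1 := @hsub x
    have h2 : x ∈ (T ∩ (A a)ᶜ) \ (T' ∩ (A a)ᶜ) ↔ x ∈ ({i} : Finset (Fin n)) := by rw [hi]
    simp only [Finset.mem_inter, Finset.mem_compl, Finset.mem_sdiff, Finset.mem_singleton, hA] at *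
    constructor
    · rintro ⟨p, rfl⟩
      exact ⟨(h1 ⟨p, hb⟩).1, rfl⟩
    · rintro ⟨p, rfl⟩
      refine ⟨?_, rfl⟩
      by_contra q
      have : x = i := h2.1 ⟨⟨p, hb⟩, fun hh => q hh.1⟩
      exact hbi (by rw [this])
  rw [← Finset.sum_sub_distrib]
  calc _ ≤ ∑ b, |(w b * if ((T' ∩ A b).card : ℤ) ≠ d b then (1 : ℝ) else 0) -
      (w b * if ((T ∩ A b).card : ℤ) ≠ d b then (1 : ℝ) else 0)| := Finset.abs_sum_le_sum_abs _ _
    _ ≤ ∑ b, ((if b = a then w b else 0) + (if b = col i then w b else 0)) := by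
        refine Finset.sum_le_sum fun b _ => ?_
        have hwb := hw b
        by_cases hb : b ≠ a ∧ b ≠ col i
        · rw [same b hb.1 hb.2, sub_self, abs_zero, if_neg hb.1, if_neg hb.2, add_zero]
        · have h1 : w b ≤ (if b = a then w b else 0) + (if b = col i then w b else 0) := by
            by_cases h1 : b = a
            · rw [if_pos h1]; split_ifs <;> linarith
            · have h2 : b = col i := by
                by_contra h2; exact hb ⟨h1, h2⟩
              rw [if_neg h1, if_pos h2, zero_add]
          refine le_trans ?_ h1
          rw [abs_le]
          split_ifs <;> constructor <;> linarith
    _ = w a + w (col i) := by rw [Finset.sum_add_distrib]; simp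
    _ ≤ 2 * W := by linarith [hW a, hW (col i)]

theorem hypergeometric_sampling_size_bias_coupling
    {Ω : Type*} [MeasurableSpace Ω] (P : Measure Ω) [IsProbabilityMeasure P]
    (m n : ℕ) (hm : 0 < m)
    (nballs : Fin m → ℕ) (hnballs : ∀ α, 1 ≤ nballs α) (hn : n = ∑ α, nballs α)
    (col : Fin n → Fin m)
    (hcol : ∀ α, (Finset.univ.filter fun i => col i = α).card = nballs α)
    (s : ℕ) (hs : s ≤ n)
    (S : Ω → Finset (Fin n))
    (hSmeas : ∀ T : Finset (Fin n), MeasurableSet {ω | S ω = T})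
    (hScard : ∀ ω, (S ω).card = s)
    (hSunif : ∀ T : Finset (Fin n), T.card = s →
      P {ω | S ω = T} = 1 / (n.choose s : ENNReal))
    (M : Fin m → Ω → ℕ)
    (hM : ∀ α ω, M α ω = ((S ω).filter fun i => col i = α).card)
    (w : Fin m → ℝ) (hw : ∀ α, 0 < w α) (d : Fin m → ℤ)
    (hge_nc : ∀ α, 0 < P {ω | d α ≤ (M α ω : ℤ)} ∧ P {ω | d α ≤ (M α ω : ℤ)} < 1)
    (hne_nc : ∀ α, 0 < P {ω | (M α ω : ℤ) ≠ d α} ∧ P {ω | (M α ω : ℤ) ≠ d α} < 1) :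
    ExistsBoundedSizeBiasCoupling
      (Measure.map (fun ω => ∑ α, w α * if d α ≤ (M α ω : ℤ) then (1 : ℝ) else 0) P)
      (Finset.univ.sup' (Finset.univ_nonempty_iff.mpr (Fin.pos_iff_nonempty.mp hm)) w) ∧
    ExistsBoundedSizeBiasCoupling
      (Measure.map (fun ω => ∑ α, w α * if (M α ω : ℤ) ≠ d α then (1 : ℝ) else 0) P)
      (2 * Finset.univ.sup' (Finset.univ_nonempty_iff.mpr (Fin.pos_iff_nonempty.mp hm)) w) := by

  classical
  obtain ⟨A, hAdef⟩ : ∃ A : Fin m → Finset (Fin n), ∀ a, A a = Finset.univ.filter fun i => col i = a :=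
    ⟨_, fun _ => rfl⟩
  have hA : ∀ a i, i ∈ A a ↔ col i = a := fun a i => by simp [hAdef]
  have hAd : ∀ a b, a ≠ b → Disjoint (A a) (A b) := by
    intro a b hab
    rw [Finset.disjoint_left]
    intro i h1 h2
    rw [hA] at h1 h2
    exact hab (h1.symm.trans h2)
  have hM' : ∀ a ω, M a ω = (S ω ∩ A a).card := by
    intro a ω
    rw [hM]
    congr 1
    ext i
    simp [hA]
  simp only [hM'] at hge_nc hne_nc ⊢
  obtain ⟨W, hWdef⟩ : ∃ W, W = Finset.univ.sup' (Finset.univ_nonempty_iff.mpr (Fin.pos_iff_nonempty.mp hm)) w :=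
    ⟨_, rfl⟩
  have hW : ∀ a, w a ≤ W := fun a => by rw [hWdef]; exact Finset.le_sup' w (Finset.mem_univ a)
  have hW0 : 0 ≤ W := (hw ⟨0, hm⟩).le.trans (hW _)
  rw [← hWdef]
  have hNpos : (0 : ℝ) < (n.choose s : ℝ) := by exact_mod_cast Nat.choose_pos hs
  have hP : ∀ T, P {ω | S ω = T} = ENNReal.ofReal (if T.card = s then 1 / (n.choose s : ℝ) else 0) := by
    intro T
    split_ifs with h
    · rw [hSunif T h, ENNReal.ofReal_div_of_pos hNpos, ENNReal.ofReal_one, ENNReal.ofReal_natCast]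
    · have : {ω | S ω = T} = ∅ := by
        ext ω
        simp only [Set.mem_ofPred_eq, Set.mem_empty_iff_false, iff_false]
        intro h'; exact h (h' ▸ hScard ω)
      rw [this]; simp
  have hLev : ∀ a ω, S ω ∈ Lev n s (A a) (S ω ∩ A a).card := fun a ω => mem_Lev.2 ⟨hScard ω, rfl⟩
  have hpos : ∀ (a : Fin m) (good : ℕ → Prop) [DecidablePred good],
      (∃ ω, good (S ω ∩ A a).card) →
      0 < ∑ T : Finset (Fin n), if T.card = s ∧ good (T ∩ A a).card then (1 : ℝ) else 0 := by
    intro a good _ ⟨ω, hω⟩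
    refine Finset.sum_pos' (fun T _ => by split_ifs <;> norm_num) ⟨S ω, Finset.mem_univ _, ?_⟩
    rw [if_pos ⟨hScard ω, hω⟩]; norm_num
  constructor
  · refine Coup.mixture P S hSmeas (fun T => T.card = s) (n.choose s : ℝ) hNpos hP hm
      (fun a T => d a ≤ ((T ∩ A a).card : ℤ)) w hw _ ?_ (fun a => rfl) W ?_
    · intro a
      refine hpos a (fun k => d a ≤ (k : ℤ)) ?_
      exact nonempty_of_measure_ne_zero (hge_nc a).1.ne'
    · intro a
      have Kpos := hpos a (fun k => d a ≤ (k : ℤ)) (nonempty_of_measure_ne_zero (hge_nc a).1.ne')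
      obtain ⟨π, p1, p2, p3, p4⟩ := ge_levels (fun k => ((Lev n s (A a) k).card : ℝ)) n
        (fun k => by positivity) (fun k => d a ≤ (k : ℤ)) _ _ (sum_levels_all (s := s) (A a))
        (sum_levels (s := s) (A a) (fun k => d a ≤ (k : ℤ))) Kpos
      refine Coup_lift (A a) _ π p1 ?_ (fun _ => 1)
        (fun k => if d a ≤ (k : ℤ) then _ else 0) p3 p4
      intro k k' hk
      obtain ⟨q1, q2, q3⟩ := p2 k k' hk
      have hkk : k ≤ k' := by
        rcases q3 with rfl | ⟨h1, h2⟩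
        · exact le_rfl
        · omega
      refine (Coup_up (A a) hkk (by exact_mod_cast q1) (by exact_mod_cast q2)).mono ?_
      rintro T T' ⟨_, _, hc⟩
      exact ge_bound A hAd w hw d W hW a T T' hc
  · have ex1 : ∀ a, ∃ ω, ((S ω ∩ A a).card : ℤ) ≠ d a := fun a =>
      nonempty_of_measure_ne_zero (hne_nc a).1.ne'
    refine Coup.mixture P S hSmeas (fun T => T.card = s) (n.choose s : ℝ) hNpos hP hm
      (fun a T => ((T ∩ A a).card : ℤ) ≠ d a) w hw _ ?_ (fun a => rfl) (2 * W) ?_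
    · intro a
      exact hpos a (fun k => (k : ℤ) ≠ d a) (ex1 a)
    · intro a
      have Kpos := hpos a (fun k => (k : ℤ) ≠ d a) (ex1 a)
      have ex2 : ∃ ω, ((S ω ∩ A a).card : ℤ) = d a := by
        by_contra hcon
        push Not at hcon
        have : {ω | ((S ω ∩ A a).card : ℤ) ≠ d a} = Set.univ := by
          ext ω; simp [hcon ω]
        have h2 := (hne_nc a).2
        rw [this, measure_univ] at h2
        exact lt_irrefl _ h2
      obtain ⟨ω, hω⟩ := ex2
      obtain ⟨e, he⟩ : ∃ e : ℕ, (e : ℤ) = d a := ⟨_, hω⟩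
      have hLe : S ω ∈ Lev n s (A a) e := by
        have := hLev a ω
        rwa [show (S ω ∩ A a).card = e by omega] at this
      have iff1 : ∀ k : ℕ, ((k : ℤ) ≠ d a) ↔ k ≠ e := fun k => by omega
      have hKs := sum_levels (s := s) (A a) (fun k => (k : ℤ) ≠ d a)
      have hen : e ∈ Finset.range (n + 1) := by
        have := Finset.card_le_univ (S ω ∩ A a)
        rw [Fintype.card_fin] at this
        rw [Finset.mem_range]; omega
      have hNK : (n.choose s : ℝ) = (∑ T : Finset (Fin n),
          if T.card = s ∧ ((T ∩ A a).card : ℤ) ≠ d a then (1 : ℝ) else 0)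
          + ((Lev n s (A a) e).card : ℝ) := by
        rw [hKs, sum_levels_all (s := s) (A a)]
        have : ((Lev n s (A a) e).card : ℝ) = ∑ k ∈ Finset.range (n + 1),
            if k = e then ((Lev n s (A a) k).card : ℝ) else 0 := by
          rw [Finset.sum_ite_eq', if_pos hen]
        rw [this, ← Finset.sum_add_distrib]
        refine Finset.sum_congr rfl fun k _ => ?_
        by_cases hk : k = e
        · rw [if_neg (by rw [iff1]; simpa using hk), if_pos hk, zero_add]
        · rw [if_pos ((iff1 k).2 hk), if_neg hk, add_zero]
      have lc := logconc_of_step (fun k => (Lev n s (A a) k).card)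
        (fun j d hjd => Lev_step (A a) hjd)
      obtain ⟨π, p1, p2, p3, p4⟩ := ne_levels (fun k => ((Lev n s (A a) k).card : ℝ)) n e
        (fun k => by positivity) (by
          intro k hk
          by_contra h
          have := (Lev_bounds (by exact_mod_cast h : (Lev n s (A a) k).card ≠ 0)).1
          omega)
        (fun i j k l d h1 h2 h3 => by exact_mod_cast lc i j k l d h1 h2 h3)
        _ _ (sum_levels_all (s := s) (A a)) hNK Kpos
        (by exact_mod_cast Finset.card_pos.2 ⟨_, hLe⟩)
      refine Coup_lift (A a) _ π p1 ?_ (fun _ => 1)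
        (fun k => if (k : ℤ) ≠ d a then _ else 0) p3 ?_
      · intro k k' hk
        obtain ⟨q1, q2, q3⟩ := p2 k k' hk
        have q1' : (Lev n s (A a) k).card ≠ 0 := by exact_mod_cast q1
        have q2' : (Lev n s (A a) k').card ≠ 0 := by exact_mod_cast q2
        rcases q3 with rfl | rfl | rfl
        · refine Coup.refl ?_ ?_
          · intro T; rw [unifLev]; split_ifs <;> positivity
          · intro T; linarith
        · refine (Coup_up (A a) (Nat.le_succ k) q1' q2').mono ?_
          rintro T T' ⟨t1, t2, hc⟩
          have := ne_bound col A hA w hw d W hW a s k T T' t1 t2 hc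
          linarith [(abs_le.1 this).2]
        · refine (Coup_up (A a) (Nat.le_succ k') q2' q1').swap.mono ?_
          rintro T' T ⟨t1, t2, hc⟩
          have := ne_bound col A hA w hw d W hW a s k' T T' t1 t2 hc
          linarith [(abs_le.1 this).1]
      · intro k hk
        rw [p4 k hk]
        simp only [iff1]
end
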